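/- arXiv:2305.16892 — 6 statements merged into one kernel-verified Lean document; each statement's English description precedes it below -/
import Mathlib

section
/- Let n, t ∈ ℕ with n ≥ 1, t ≥ 1, let α ∈ (0,1], and let Σ be an n×n positive semidefinite real matrix. Then (α²/3)·𝒫_{t,α²/2}(Σ) ≤ 𝒩_{t,α}(Σ) and 𝒩_{t,α}(Σ) ≤ 𝒫_{t,α}(Σ). -/
open Matrix MeasureTheory ProbabilityTheory
open scoped BigOperators ENNReal

noncomputable section

/-- `v` has at most `t` nonzero coordinates. -/
def SparseVec {k : ℕ} (t : ℕ) (v : Fin k → ℝ) : Prop := {i | v i ≠ 0}.ncard ≤ t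

/-- ⟨x,y⟩_Σ := xᵀ Σ y. -/
def innerSigma {k : ℕ} (A : Matrix (Fin k) (Fin k) ℝ) (x y : Fin k → ℝ) : ℝ := x ⬝ᵥ (A *ᵥ y)

/-- ‖x‖_Σ := √(xᵀ Σ x). -/
def normSigma {k : ℕ} (A : Matrix (Fin k) (Fin k) ℝ) (x : Fin k → ℝ) : ℝ :=
  Real.sqrt (innerSigma A x x)

/-- Euclidean norm on ℝ^k. -/
def l2norm {k : ℕ} (v : Fin k → ℝ) : ℝ := Real.sqrt (∑ i, v i ^ 2)

/-- ℓ1 norm on ℝ^k. -/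
def l1norm {k : ℕ} (v : Fin k → ℝ) : ℝ := ∑ i, |v i|

/-- `D` is a `(t,α)`-dictionary for `A`: every `t`-sparse `v` with ‖v‖_Σ > 0 correlates
with some element of `D` at level `α` under the Σ-inner product. -/
def IsDictionary {k : ℕ} (t : ℕ) (α : ℝ) (A : Matrix (Fin k) (Fin k) ℝ) {N : ℕ}
    (D : Fin N → Fin k → ℝ) : Prop :=
  ∀ v : Fin k → ℝ, SparseVec t v → 0 < normSigma A v →
    ∃ i, 0 < normSigma A (D i) ∧ α * (normSigma A v * normSigma A (D i)) ≤ |innerSigma A v (D i)|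

/-- 𝒩_{t,α}(Σ): the minimum size of a `(t,α)`-dictionary (as an element of ℕ ∪ {∞}). -/
def coveringNumber {k : ℕ} (t : ℕ) (α : ℝ) (A : Matrix (Fin k) (Fin k) ℝ) : ℝ≥0∞ :=
  sInf {c : ℝ≥0∞ | ∃ (N : ℕ) (D : Fin N → Fin k → ℝ), IsDictionary t α A D ∧ c = (N : ℝ≥0∞)}

/-- `V` lists the elements of a `(t,α)`-packing for `A` (distinct `t`-sparse vectors of
positive Σ-norm with pairwise Σ-correlations strictly below `α`). -/
def IsPacking {k : ℕ} (t : ℕ) (α : ℝ) (A : Matrix (Fin k) (Fin k) ℝ) {N : ℕ}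
    (V : Fin N → Fin k → ℝ) : Prop :=
  Function.Injective V ∧ (∀ i, SparseVec t (V i) ∧ 0 < normSigma A (V i)) ∧
    ∀ i j, i ≠ j → |innerSigma A (V i) (V j)| < α * (normSigma A (V i) * normSigma A (V j))

/-- 𝒫_{t,α}(Σ): the supremum of sizes of `(t,α)`-packings (as an element of ℕ ∪ {∞}). -/
def packingNumber {k : ℕ} (t : ℕ) (α : ℝ) (A : Matrix (Fin k) (Fin k) ℝ) : ℝ≥0∞ :=
  sSup {c : ℝ≥0∞ | ∃ (N : ℕ) (V : Fin N → Fin k → ℝ), IsPacking t α A V ∧ c = (N : ℝ≥0∞)}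

/-!
For the first inequality, assign each member of a packing at level `β` to a dictionary element `d`
with which it is `α`-correlated. Suppose `m` members are assigned to the same `d`. Normalise them
and choose their signs so that they point towards `d`: their sum `s` satisfies
`⟨s, d⟩ ≥ m * α * ‖d‖` and `‖s‖ ^ 2 ≤ m * (1 + m * β)`, so Cauchy–Schwarz gives
`m * (α ^ 2 - β) ≤ 1`. Summing over the dictionary yields `(α ^ 2 - β) * P_β ≤ N_α`; taking
`β = α ^ 2 / 2` gives even the constant `α ^ 2 / 2`.

For the second, a packing that is not a dictionary can be enlarged by a vector it misses, so either
some packing is a dictionary or there are packings of every size.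
-/

section InnerProductSpace

variable {E ι : Type*} [SeminormedAddCommGroup E] [InnerProductSpace ℝ E]
  {s : Finset ι} {α β : ℝ} {d : E}

lemma norm_sum_sq_le_of_pairwise_inner_le {f : ι → E} (hβ : 0 ≤ β) (hf : ∀ i ∈ s, ‖f i‖ ≤ 1)
    (hff : (s : Set ι).Pairwise fun i j ↦ inner ℝ (f i) (f j) ≤ β) :
    ‖∑ i ∈ s, f i‖ ^ 2 ≤ s.card * (1 + s.card * β) := by
  classical
  have entry_le : ∀ i ∈ s, ∀ j ∈ s, inner ℝ (f i) (f j) ≤ (if i = j then 1 else 0) + β := by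
    intro i hi j hj
    split_ifs with hij
    · subst hij
      rw [real_inner_self_eq_norm_sq]
      linarith [pow_le_one₀ (n := 2) (norm_nonneg (f i)) (hf i hi)]
    · linarith [hff hi hj hij]
  have row_le : ∀ i ∈ s, ∑ j ∈ s, inner ℝ (f i) (f j) ≤ 1 + s.card * β := fun i hi ↦
    calc ∑ j ∈ s, inner ℝ (f i) (f j)
        ≤ ∑ j ∈ s, ((if i = j then 1 else 0) + β) := Finset.sum_le_sum (entry_le i hi)
      _ = 1 + s.card * β := by simp [Finset.sum_add_distrib, hi]
  calc ‖∑ i ∈ s, f i‖ ^ 2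
      = ∑ i ∈ s, ∑ j ∈ s, inner ℝ (f i) (f j) := by
        rw [← real_inner_self_eq_norm_sq, sum_inner]
        simp only [inner_sum]
    _ ≤ s.card * (1 + s.card * β) := by
        simpa only [nsmul_eq_mul] using Finset.sum_le_card_nsmul s _ _ row_le

lemma card_mul_le_norm_sum_of_le_inner {f : ι → E} (hd : 0 < ‖d‖)
    (hfd : ∀ i ∈ s, α * ‖d‖ ≤ inner ℝ (f i) d) : s.card * α ≤ ‖∑ i ∈ s, f i‖ := by
  refine le_of_mul_le_mul_right ?_ hd
  calc s.card * α * ‖d‖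
      = s.card • (α * ‖d‖) := by rw [nsmul_eq_mul, mul_assoc]
    _ ≤ ∑ i ∈ s, inner ℝ (f i) d := Finset.card_nsmul_le_sum s _ _ hfd
    _ = inner ℝ (∑ i ∈ s, f i) d := (sum_inner s f d).symm
    _ ≤ ‖∑ i ∈ s, f i‖ * ‖d‖ := real_inner_le_norm _ _

lemma card_mul_sq_sub_le_one_of_inner {f : ι → E} (hα : 0 ≤ α) (hβ : 0 ≤ β) (hd : 0 < ‖d‖)
    (hf : ∀ i ∈ s, ‖f i‖ ≤ 1) (hfd : ∀ i ∈ s, α * ‖d‖ ≤ inner ℝ (f i) d)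
    (hff : (s : Set ι).Pairwise fun i j ↦ inner ℝ (f i) (f j) ≤ β) :
    s.card * (α ^ 2 - β) ≤ 1 := by
  rcases s.eq_empty_or_nonempty with rfl | hs
  · simp
  have card_pos : (0 : ℝ) < s.card := mod_cast hs.card_pos
  have sq_le : (s.card * α) ^ 2 ≤ s.card * (1 + s.card * β) :=
    (pow_le_pow_left₀ (by positivity) (card_mul_le_norm_sum_of_le_inner hd hfd) 2).trans
      (norm_sum_sq_le_of_pairwise_inner_le hβ hf hff)
  refine le_of_mul_le_mul_left ?_ card_pos
  linarith

/-- The unit vector spanned by `x`, with its sign chosen so that it points towards `d`; it is zero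
when `x` has norm zero or is orthogonal to `d`. Passing to it turns bounds on absolute correlations
into bounds on inner products, which can be summed. -/
def unitTowards (d x : E) : E :=
  ((SignType.sign (inner ℝ x d) : ℝ) * ‖x‖⁻¹) • x

lemma abs_coe_signType_le_one (σ : SignType) : |(σ : ℝ)| ≤ 1 := by
  cases σ <;> simp

lemma norm_unitTowards_le_one (d x : E) : ‖unitTowards d x‖ ≤ 1 := by
  rw [unitTowards, norm_smul, Real.norm_eq_abs, abs_mul, abs_inv, abs_norm, mul_assoc]
  exact mul_le_one₀ (abs_coe_signType_le_one _) (by positivity) inv_mul_le_one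

lemma inner_unitTowards_left (d x : E) :
    inner ℝ (unitTowards d x) d = |inner ℝ x d| / ‖x‖ := by
  rw [unitTowards, real_inner_smul_left, mul_right_comm, sign_mul_self, div_eq_mul_inv]

lemma inner_unitTowards_unitTowards_le (d x y : E) :
    inner ℝ (unitTowards d x) (unitTowards d y) ≤ |inner ℝ x y| / (‖x‖ * ‖y‖) := by
  let σ : ℝ := (SignType.sign (inner ℝ x d) : SignType)
  let τ : ℝ := (SignType.sign (inner ℝ y d) : SignType)
  have sign_le : |σ * τ| ≤ 1 := by
    rw [abs_mul]
    exact mul_le_one₀ (abs_coe_signType_le_one _) (abs_nonneg _) (abs_coe_signType_le_one _)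
  calc inner ℝ (unitTowards d x) (unitTowards d y)
      = σ * τ * (inner ℝ x y / (‖x‖ * ‖y‖)) := by
        rw [unitTowards, unitTowards, real_inner_smul_left, real_inner_smul_right]
        ring
    _ ≤ |σ * τ| * |inner ℝ x y / (‖x‖ * ‖y‖)| := (le_abs_self _).trans_eq (abs_mul _ _)
    _ ≤ |inner ℝ x y / (‖x‖ * ‖y‖)| := mul_le_of_le_one_left (abs_nonneg _) sign_le
    _ = |inner ℝ x y| / (‖x‖ * ‖y‖) := by rw [abs_div, abs_mul, abs_norm, abs_norm]

lemma card_mul_sq_sub_le_one_of_abs_inner {x : ι → E} (hα : 0 ≤ α) (hβ : 0 ≤ β) (hd : 0 < ‖d‖)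
    (hx : ∀ i ∈ s, 0 < ‖x i‖) (hxd : ∀ i ∈ s, α * (‖x i‖ * ‖d‖) ≤ |inner ℝ (x i) d|)
    (hxx : (s : Set ι).Pairwise fun i j ↦ |inner ℝ (x i) (x j)| ≤ β * (‖x i‖ * ‖x j‖)) :
    s.card * (α ^ 2 - β) ≤ 1 := by
  refine card_mul_sq_sub_le_one_of_inner (f := fun i ↦ unitTowards d (x i)) hα hβ hd
    (fun i _ ↦ norm_unitTowards_le_one d (x i)) (fun i hi ↦ ?_) (fun i hi j hj hij ↦ ?_)
  · rw [inner_unitTowards_left, le_div_iff₀ (hx i hi)]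
    linarith [hxd i hi]
  · exact (inner_unitTowards_unitTowards_le d (x i) (x j)).trans <|
      (div_le_iff₀ (mul_pos (hx i hi) (hx j hj))).2 (hxx hi hj hij)

end InnerProductSpace

open scoped ComplexOrder MatrixOrder Matrix.Norms.L2Operator in
lemma exists_eq_conjTranspose_mul_self {ι 𝕜 : Type*} [Fintype ι] [RCLike 𝕜] {A : Matrix ι ι 𝕜}
    (hA : A.PosSemidef) : ∃ B : Matrix ι ι 𝕜, A = Bᴴ * B := by
  classical
  exact CStarAlgebra.nonneg_iff_eq_star_mul_self.1 hA.nonneg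

section SigmaForm

variable {k t : ℕ} {A : Matrix (Fin k) (Fin k) ℝ}

lemma innerSigma_comm (hA : A.IsSymm) (x y : Fin k → ℝ) : innerSigma A x y = innerSigma A y x := by
  rw [innerSigma, innerSigma, ← dotProduct_transpose_mulVec, hA.eq]

lemma innerSigma_smul_left (c : ℝ) (x y : Fin k → ℝ) :
    innerSigma A (c • x) y = c * innerSigma A x y :=
  smul_dotProduct c x (A *ᵥ y)

lemma normSigma_smul (c : ℝ) (x : Fin k → ℝ) : normSigma A (c • x) = |c| * normSigma A x := by
  have inner_smul : innerSigma A (c • x) (c • x) = c ^ 2 * innerSigma A x x := by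
    rw [innerSigma_smul_left, innerSigma, mulVec_smul, dotProduct_smul, smul_eq_mul, ← mul_assoc,
      ← sq, innerSigma]
  rw [normSigma, inner_smul, Real.sqrt_mul (sq_nonneg c), Real.sqrt_sq_eq_abs, normSigma]

lemma ne_zero_of_normSigma_pos {x : Fin k → ℝ} (hx : 0 < normSigma A x) : x ≠ 0 := by
  rintro rfl
  simp [normSigma, innerSigma] at hx

lemma SparseVec.smul {v : Fin k → ℝ} (hv : SparseVec t v) (c : ℝ) : SparseVec t (c • v) :=
  (Set.ncard_le_ncard fun _ ↦ right_ne_zero_of_mul).trans hv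

lemma innerSigma_conjTranspose_mul_self {ι : Type*} [Fintype ι] (B : Matrix ι (Fin k) ℝ)
    (x y : Fin k → ℝ) :
    innerSigma (Bᴴ * B) x y = inner ℝ (WithLp.toLp 2 (B *ᵥ x)) (WithLp.toLp 2 (B *ᵥ y)) := by
  rw [EuclideanSpace.inner_toLp_toLp, star_trivial, innerSigma, ← mulVec_mulVec,
    conjTranspose_eq_transpose_of_trivial, dotProduct_transpose_mulVec]

lemma normSigma_conjTranspose_mul_self {ι : Type*} [Fintype ι] (B : Matrix ι (Fin k) ℝ)
    (x : Fin k → ℝ) :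
    normSigma (Bᴴ * B) x = ‖WithLp.toLp 2 (B *ᵥ x)‖ := by
  rw [normSigma, innerSigma_conjTranspose_mul_self, norm_eq_sqrt_real_inner]

end SigmaForm

lemma exists_pos_smul_notMem {V : Type*} [AddCommGroup V] [Module ℝ V] {v : V} (hv : v ≠ 0)
    {s : Set V} (hs : s.Finite) : ∃ c : ℝ, 0 < c ∧ c • v ∉ s := by
  have ray_infinite : ((fun c : ℝ ↦ c • v) '' Set.Ioi 0).Infinite :=
    (Set.Ioi_infinite 0).image (smul_left_injective ℝ hv).injOn
  obtain ⟨_, ⟨c, hc, rfl⟩, hcs⟩ := ray_infinite.exists_notMem_finite hs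
  exact ⟨c, hc, hcs⟩

section PackingDictionary

variable {k t M N : ℕ} {α β : ℝ} {A : Matrix (Fin k) (Fin k) ℝ} {V : Fin M → Fin k → ℝ}
  {D : Fin N → Fin k → ℝ}

lemma IsPacking.card_mul_sq_sub_le_one (hV : IsPacking t β A V) (hA : A.PosSemidef) (hα : 0 ≤ α)
    (hβ : 0 ≤ β) {d : Fin k → ℝ} (hd : 0 < normSigma A d) {s : Finset (Fin M)}
    (hs : ∀ i ∈ s, α * (normSigma A (V i) * normSigma A d) ≤ |innerSigma A (V i) d|) :
    s.card * (α ^ 2 - β) ≤ 1 := by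
  obtain ⟨B, rfl⟩ := exists_eq_conjTranspose_mul_self hA
  obtain ⟨-, hVpos, hVV⟩ := hV
  simp only [innerSigma_conjTranspose_mul_self, normSigma_conjTranspose_mul_self]
    at hd hs hVpos hVV
  exact card_mul_sq_sub_le_one_of_abs_inner hα hβ hd (fun i _ ↦ (hVpos i).2) hs
    fun i _ j _ hij ↦ (hVV i j hij).le

lemma IsPacking.mul_sq_sub_le_of_isDictionary (hV : IsPacking t β A V)
    (hD : IsDictionary t α A D) (hA : A.PosSemidef) (hα : 0 ≤ α) (hβ : 0 ≤ β) :
    M * (α ^ 2 - β) ≤ N := by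
  choose g hgpos hgcorr using fun i ↦ hD (V i) (hV.2.1 i).1 (hV.2.1 i).2
  have fiber_le : ∀ j, (Finset.univ.filter (g · = j)).card * (α ^ 2 - β) ≤ 1 := by
    intro j
    rcases (Finset.univ.filter (g · = j)).eq_empty_or_nonempty with hj | ⟨i, hi⟩
    · simp [hj]
    · obtain rfl : g i = j := (Finset.mem_filter.1 hi).2
      refine hV.card_mul_sq_sub_le_one hA hα hβ (hgpos i) fun i' hi' ↦ ?_
      rw [← (Finset.mem_filter.1 hi').2]
      exact hgcorr i'
  have card_eq : M = ∑ j, (Finset.univ.filter (g · = j)).card := by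
    simpa using Finset.card_eq_sum_card_fiberwise (f := g) (s := Finset.univ) (t := Finset.univ)
      fun i _ ↦ Finset.mem_univ (g i)
  calc M * (α ^ 2 - β)
      = ∑ j, (Finset.univ.filter (g · = j)).card * (α ^ 2 - β) := by
        rw [← Finset.sum_mul, ← Nat.cast_sum, ← card_eq]
    _ ≤ N := by simpa using Finset.sum_le_card_nsmul Finset.univ _ _ fun j _ ↦ fiber_le j

lemma IsPacking.cons (hV : IsPacking t α A V) (hA : A.IsSymm) {v : Fin k → ℝ}
    (hv : SparseVec t v) (hvpos : 0 < normSigma A v) (hvV : v ∉ Set.range V)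
    (hcorr : ∀ i, |innerSigma A v (V i)| < α * (normSigma A v * normSigma A (V i))) :
    IsPacking t α A (Fin.cons v V : Fin (M + 1) → Fin k → ℝ) := by
  obtain ⟨hVinj, hVpos, hVV⟩ := hV
  refine ⟨Fin.cons_injective_iff.2 ⟨hvV, hVinj⟩, Fin.cases ⟨hv, hvpos⟩ hVpos, ?_⟩
  refine Fin.cases (Fin.cases (absurd rfl) fun j _ ↦ hcorr j) fun i ↦ Fin.cases (fun _ ↦ ?_) ?_
  · simpa only [Fin.cons_succ, Fin.cons_zero, innerSigma_comm hA (V i),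
      mul_comm (normSigma A (V i))] using hcorr i
  · exact fun j hij ↦ hVV i j (mt (congrArg Fin.succ) hij)

lemma IsPacking.exists_isPacking_succ_of_not_isDictionary (hV : IsPacking t α A V) (hA : A.IsSymm)
    (hD : ¬ IsDictionary t α A V) :
    ∃ W : Fin (M + 1) → Fin k → ℝ, IsPacking t α A W := by
  unfold IsDictionary at hD
  push Not at hD
  obtain ⟨v, hv, hvpos, hcorr⟩ := hD
  -- For `1 < α` the missed vector may itself belong to the packing, hence the rescaling.
  obtain ⟨c, hc, hcV⟩ :=
    exists_pos_smul_notMem (ne_zero_of_normSigma_pos hvpos) (Set.finite_range V)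
  refine ⟨_, hV.cons hA (hv.smul c) ?_ hcV fun i ↦ ?_⟩
  · rw [normSigma_smul, abs_of_pos hc]
    positivity
  · calc |innerSigma A (c • v) (V i)|
        = c * |innerSigma A v (V i)| := by rw [innerSigma_smul_left, abs_mul, abs_of_pos hc]
      _ < c * (α * (normSigma A v * normSigma A (V i))) :=
        mul_lt_mul_of_pos_left (hcorr i (hV.2.1 i).2) hc
      _ = α * (normSigma A (c • v) * normSigma A (V i)) := by
        rw [normSigma_smul, abs_of_pos hc]
        ring

lemma exists_isPacking_of_forall_not_isDictionary (hA : A.IsSymm)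
    (h : ∀ (N : ℕ) (V : Fin N → Fin k → ℝ), IsPacking t α A V → ¬ IsDictionary t α A V) (N : ℕ) :
    ∃ V : Fin N → Fin k → ℝ, IsPacking t α A V := by
  induction N with
  | zero =>
    exact ⟨Fin.elim0, Function.injective_of_subsingleton _, fun i ↦ i.elim0, fun i ↦ i.elim0⟩
  | succ N ih =>
    obtain ⟨V, hV⟩ := ih
    exact hV.exists_isPacking_succ_of_not_isDictionary hA (h N V hV)

lemma IsDictionary.coveringNumber_le (hD : IsDictionary t α A D) : coveringNumber t α A ≤ N :=
  sInf_le ⟨N, D, hD, rfl⟩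

lemma IsPacking.le_packingNumber (hV : IsPacking t α A V) : M ≤ packingNumber t α A :=
  le_sSup ⟨M, V, hV, rfl⟩

theorem ofReal_sq_sub_mul_packingNumber_le_coveringNumber (hA : A.PosSemidef) (hα : 0 ≤ α)
    (hβ : 0 ≤ β) :
    ENNReal.ofReal (α ^ 2 - β) * packingNumber t β A ≤ coveringNumber t α A := by
  refine le_sInf ?_
  rintro _ ⟨N, D, hD, rfl⟩
  rw [packingNumber, ENNReal.mul_sSup]
  refine iSup₂_le ?_
  rintro _ ⟨M, V, hV, rfl⟩
  rw [← ENNReal.ofReal_natCast M, ← ENNReal.ofReal_mul' M.cast_nonneg, mul_comm,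
    ← ENNReal.ofReal_natCast N]
  exact ENNReal.ofReal_le_ofReal (hV.mul_sq_sub_le_of_isDictionary hD hA hα hβ)

theorem coveringNumber_le_packingNumber (hA : A.IsSymm) :
    coveringNumber t α A ≤ packingNumber t α A := by
  by_cases h : ∃ (N : ℕ) (V : Fin N → Fin k → ℝ), IsPacking t α A V ∧ IsDictionary t α A V
  · obtain ⟨N, V, hV, hD⟩ := h
    exact hD.coveringNumber_le.trans hV.le_packingNumber
  · push Not at h
    have top_le : ⊤ ≤ packingNumber t α A := by
      rw [← ENNReal.iSup_natCast]
      refine iSup_le fun N ↦ ?_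
      obtain ⟨V, hV⟩ := exists_isPacking_of_forall_not_isDictionary hA h N
      exact hV.le_packingNumber
    exact le_top.trans top_le

end PackingDictionary

theorem stmt0_general {n t : ℕ} {α β : ℝ} (hα : 0 ≤ α) (hβ : 0 ≤ β)
    {A : Matrix (Fin n) (Fin n) ℝ} (hA : A.PosSemidef) :
    ENNReal.ofReal (α ^ 2 - β) * packingNumber t β A ≤ coveringNumber t α A ∧
      coveringNumber t α A ≤ packingNumber t α A :=
  ⟨ofReal_sq_sub_mul_packingNumber_le_coveringNumber hA hα hβ,
    coveringNumber_le_packingNumber (isHermitian_iff_isSymm.1 hA.isHermitian)⟩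

/-- (α²/3)·𝒫_{t,α²/2}(Σ) ≤ 𝒩_{t,α}(Σ) and 𝒩_{t,α}(Σ) ≤ 𝒫_{t,α}(Σ). -/
theorem stmt0 (n t : ℕ) (hn : 1 ≤ n) (ht : 1 ≤ t) (α : ℝ) (hα0 : 0 < α) (hα1 : α ≤ 1)
    (A : Matrix (Fin n) (Fin n) ℝ) (hA : A.PosSemidef) :
    ENNReal.ofReal (α ^ 2 / 3) * packingNumber t (α ^ 2 / 2) A ≤ coveringNumber t α A ∧
      coveringNumber t α A ≤ packingNumber t α A := by
  have const_le : α ^ 2 / 3 ≤ α ^ 2 - α ^ 2 / 2 := by linarith [sq_nonneg α]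
  exact (stmt0_general hα0.le (by positivity) hA).imp_left
    (mul_le_mul_left (ENNReal.ofReal_le_ofReal const_le) _).trans
end
end

section
/- Let n, t, N ∈ ℕ, let B > 0, and let Σ be an n×n positive semidefinite real matrix. If {D₁,…,D_N} ⊆ ℝⁿ is a (t,B)-ℓ1-representation for Σ, then {D₁,…,D_N} is also a (t,1/B)-dictionary for Σ. -/
open Matrix MeasureTheory ProbabilityTheory
open scoped BigOperators ENNReal

noncomputable section

/-- `D` is a `(t,B)`-ℓ1-representation for `A`: every `t`-sparse `v` can be written as a
linear combination of the `D i` with ℓ1 cost (weighted by Σ-norms) at most `B·‖v‖_Σ`. -/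
def IsL1Rep {k : ℕ} (t : ℕ) (B : ℝ) (A : Matrix (Fin k) (Fin k) ℝ) {N : ℕ}
    (D : Fin N → Fin k → ℝ) : Prop :=
  ∀ v : Fin k → ℝ, SparseVec t v → ∃ a : Fin N → ℝ,
    v = ∑ i, a i • D i ∧ ∑ i, |a i| * normSigma A (D i) ≤ B * normSigma A v

/-! If `v = ∑ aᵢ Dᵢ` and a linear map `f` satisfies `‖f Dᵢ‖ ≤ M ‖Dᵢ‖` for all `i`, then
`‖f v‖ ≤ M ∑ |aᵢ| ‖Dᵢ‖`. Take `f = ⟪v, ·⟫` and let `M` be the largest ratio `|⟪v, Dᵢ⟫| / ‖Dᵢ‖`: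
an ℓ1-cost of at most `B ‖v‖` gives `‖v‖² ≤ M B ‖v‖`, so an atom attaining `M` correlates with `v`
at level `1 / B`. All of this happens in a seminormed inner product space, such as the one that a
positive semidefinite matrix induces on `ℝⁿ`. -/

section Seminormed

variable {𝕜 E F ι : Type*} [NontriviallyNormedField 𝕜] [SeminormedAddCommGroup E]
  [NormedSpace 𝕜 E] [SeminormedAddCommGroup F] [NormedSpace 𝕜 F]

theorem norm_map_sum_smul_le (f : E →ₗ[𝕜] F) {s : Finset ι} (a : ι → 𝕜) {D : ι → E} {M : ℝ}
    (hM : ∀ i ∈ s, ‖f (D i)‖ ≤ M * ‖D i‖) :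
    ‖f (∑ i ∈ s, a i • D i)‖ ≤ M * ∑ i ∈ s, ‖a i‖ * ‖D i‖ := by
  rw [map_sum, Finset.mul_sum]
  refine norm_sum_le_of_le s fun i hi => ?_
  calc ‖f (a i • D i)‖ = ‖a i‖ * ‖f (D i)‖ := by rw [map_smul, norm_smul]
    _ ≤ ‖a i‖ * (M * ‖D i‖) := by gcongr; exact hM i hi
    _ = M * (‖a i‖ * ‖D i‖) := mul_left_comm _ _ _

theorem exists_norm_map_sum_smul_mul_norm_le (f : E →L[𝕜] F) {s : Finset ι} {a : ι → 𝕜}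
    {D : ι → E} (hf : 0 < ‖f (∑ i ∈ s, a i • D i)‖) :
    ∃ i ∈ s, 0 < ‖D i‖ ∧
      ‖f (∑ i ∈ s, a i • D i)‖ * ‖D i‖ ≤ (∑ i ∈ s, ‖a i‖ * ‖D i‖) * ‖f (D i)‖ := by
  have hs : s.Nonempty := by
    rw [Finset.nonempty_iff_ne_empty]
    rintro rfl
    simp at hf
  obtain ⟨i, hi, hmax⟩ := s.exists_max_image (fun i => ‖f (D i)‖ / ‖D i‖) hs
  -- Where `‖D j‖ = 0` the quotient is `0`, but then `‖f (D j)‖ = 0` by continuity of `f`.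
  have hratio : ∀ j ∈ s, ‖f (D j)‖ ≤ ‖f (D i)‖ / ‖D i‖ * ‖D j‖ := fun j hj => by
    obtain hDj | hDj := (norm_nonneg (D j)).eq_or_lt
    · simpa only [← hDj, mul_zero] using f.le_opNorm (D j)
    · exact (div_le_iff₀ hDj).mp (hmax j hj)
  have hbound : ‖f (∑ i ∈ s, a i • D i)‖ ≤
      ‖f (D i)‖ / ‖D i‖ * ∑ i ∈ s, ‖a i‖ * ‖D i‖ :=
    norm_map_sum_smul_le (f : E →ₗ[𝕜] F) a hratio
  have hDi : 0 < ‖D i‖ := (norm_nonneg _).lt_of_ne fun h => by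
    rw [← h, div_zero, zero_mul] at hbound
    exact hbound.not_gt hf
  refine ⟨i, hi, hDi, ?_⟩
  rwa [div_mul_eq_mul_div, le_div_iff₀ hDi, mul_comm ‖f (D i)‖] at hbound

end Seminormed

theorem stmt1_general {𝕜 E ι : Type*} [RCLike 𝕜] [SeminormedAddCommGroup E]
    [InnerProductSpace 𝕜 E] [Fintype ι] {B : ℝ} {S : Set E} {D : ι → E}
    (hD : ∀ v ∈ S, ∃ a : ι → 𝕜, v = ∑ i, a i • D i ∧ ∑ i, ‖a i‖ * ‖D i‖ ≤ B * ‖v‖) :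
    ∀ v ∈ S, 0 < ‖v‖ →
      ∃ i, 0 < ‖D i‖ ∧ 1 / B * (‖v‖ * ‖D i‖) ≤ ‖inner 𝕜 v (D i)‖ := by
  intro v hvS hv
  obtain ⟨a, hva, hcost⟩ := hD v hvS
  have hself : ‖innerSL 𝕜 v (∑ i, a i • D i)‖ = ‖v‖ * ‖v‖ := by
    rw [← hva, innerSL_apply_apply, ← inner_self_re_eq_norm, inner_self_eq_norm_mul_norm]
  obtain ⟨i, -, hDi, hi⟩ :=
    exists_norm_map_sum_smul_mul_norm_le (innerSL 𝕜 v) (hself ▸ mul_pos hv hv)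
  have hB : 0 < B := by
    have hle : ‖v‖ ≤ ∑ i, ‖a i‖ * ‖D i‖ := by
      simpa only [← hva, norm_smul] using norm_sum_le Finset.univ fun i => a i • D i
    exact pos_of_mul_pos_left (hv.trans_le (hle.trans hcost)) hv.le
  refine ⟨i, hDi, ?_⟩
  rw [one_div, inv_mul_le_iff₀ hB]
  refine le_of_mul_le_mul_left ?_ hv
  calc ‖v‖ * (‖v‖ * ‖D i‖) = ‖v‖ * ‖v‖ * ‖D i‖ := (mul_assoc _ _ _).symm
    _ ≤ (∑ i, ‖a i‖ * ‖D i‖) * ‖inner 𝕜 v (D i)‖ := hself ▸ hi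
    _ ≤ B * ‖v‖ * ‖inner 𝕜 v (D i)‖ := by gcongr
    _ = ‖v‖ * (B * ‖inner 𝕜 v (D i)‖) := by ring

section InnerSigma

variable {k : ℕ} {A : Matrix (Fin k) (Fin k) ℝ}

theorem inner_eq_innerSigma (hA : A.PosSemidef) (x y : Fin k → ℝ) :
    letI := A.toSeminormedAddCommGroup hA
    letI := A.toInnerProductSpace hA
    inner ℝ x y = innerSigma A x y :=
  dotProduct_comm _ _

theorem norm_eq_normSigma (hA : A.PosSemidef) (x : Fin k → ℝ) :
    letI := (A.toSeminormedAddCommGroup hA).toNorm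
    ‖x‖ = normSigma A x := by
  let := A.toSeminormedAddCommGroup hA
  let := A.toInnerProductSpace hA
  rw [normSigma, ← inner_eq_innerSigma hA]
  exact norm_eq_sqrt_real_inner x

end InnerSigma

/-- a (t,B)-ℓ1-representation is a (t,1/B)-dictionary. -/
theorem stmt1 (n t N : ℕ) (B : ℝ) (hB : 0 < B)
    (A : Matrix (Fin n) (Fin n) ℝ) (hA : A.PosSemidef)
    (D : Fin N → Fin n → ℝ) (hD : IsL1Rep t B A D) :
    IsDictionary t (1 / B) A D := by
  let := A.toSeminormedAddCommGroup hA
  let := A.toInnerProductSpace hA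
  simp only [IsL1Rep, IsDictionary, ← norm_eq_normSigma hA, ← inner_eq_innerSigma hA] at hD ⊢
  exact stmt1_general (𝕜 := ℝ) (S := {v | SparseVec t v}) hD
end
end

section
/- Let n, t ∈ ℕ with t ≥ 1, let κ > 0, and let Σ be an n×n positive definite real matrix whose condition number satisfies λ_max(Σ)/λ_min(Σ) ≤ κ. Then for every t-sparse v ∈ ℝⁿ with ‖v‖_Σ > 0 there exists i ∈ [n] with |⟨v, eᵢ⟩_Σ| ≥ (1/√(κt))·‖v‖_Σ·‖eᵢ‖_Σ; in other words, the standard basis {e₁,…,eₙ} is a (t, 1/√(κt))-dictionary for Σ. -/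
open Matrix MeasureTheory ProbabilityTheory
open scoped BigOperators ENNReal

noncomputable section

/-!
Expanding one argument of `‖v‖_Σ² = ⟨v, v⟩_Σ` in the standard basis gives
`‖v‖_Σ² ≤ ‖v‖₁ · maxᵢ |⟨v, eᵢ⟩_Σ|`, and `‖v‖₁ ≤ √t ‖v‖₂` for `t`-sparse `v`. The condition number
enters only through `‖eᵢ‖_Σ ‖v‖₂ ≤ √κ ‖v‖_Σ`, which holds because `‖eᵢ‖_Σ² ≤ λ_max(Σ)` and
`λ_min(Σ) ‖v‖₂² ≤ ‖v‖_Σ²`. Multiplying these bounds and cancelling `‖v‖_Σ` gives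
`‖v‖_Σ ‖eᵢ‖_Σ ≤ √(κ t) |⟨v, eᵢ⟩_Σ|` for the maximizing `i`.
-/

section QuadraticForm

open scoped ComplexOrder MatrixOrder Matrix.Norms.L2Operator

variable {𝕜 ι : Type*} [RCLike 𝕜] [Fintype ι]

theorem star_dotProduct_mulVec_mono {A B : Matrix ι ι 𝕜} (hAB : A ≤ B) (x : ι → 𝕜) :
    star x ⬝ᵥ (A *ᵥ x) ≤ star x ⬝ᵥ (B *ᵥ x) := by
  have hpos := (Matrix.le_iff.1 hAB).dotProduct_mulVec_nonneg x
  rwa [sub_mulVec, dotProduct_sub, sub_nonneg] at hpos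

variable [DecidableEq ι] {A : Matrix ι ι 𝕜}

theorem star_dotProduct_algebraMap_mulVec (c : ℝ) (x : ι → 𝕜) :
    star x ⬝ᵥ (algebraMap ℝ (Matrix ι ι 𝕜) c *ᵥ x) = c * (star x ⬝ᵥ x) := by
  rw [Algebra.algebraMap_eq_smul_one, smul_mulVec, one_mulVec, dotProduct_smul,
    RCLike.real_smul_eq_coe_mul]

theorem star_dotProduct_mulVec_le_of_eigenvalues_le (hA : A.IsHermitian) {c : ℝ}
    (hc : ∀ i, hA.eigenvalues i ≤ c) (x : ι → 𝕜) :
    star x ⬝ᵥ (A *ᵥ x) ≤ c * (star x ⬝ᵥ x) := by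
  rw [← star_dotProduct_algebraMap_mulVec]
  apply star_dotProduct_mulVec_mono
  rw [le_algebraMap_iff_spectrum_le hA.isSelfAdjoint, hA.spectrum_real_eq_range_eigenvalues]
  exact Set.forall_mem_range.2 hc

theorem mul_star_dotProduct_le_of_le_eigenvalues (hA : A.IsHermitian) {c : ℝ}
    (hc : ∀ i, c ≤ hA.eigenvalues i) (x : ι → 𝕜) :
    c * (star x ⬝ᵥ x) ≤ star x ⬝ᵥ (A *ᵥ x) := by
  rw [← star_dotProduct_algebraMap_mulVec]
  apply star_dotProduct_mulVec_mono
  rw [algebraMap_le_iff_le_spectrum hA.isSelfAdjoint, hA.spectrum_real_eq_range_eigenvalues]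
  exact Set.forall_mem_range.2 hc

end QuadraticForm

theorem exists_dotProduct_le_sum_abs_mul_abs {ι R : Type*} [Fintype ι] [Nonempty ι]
    [Ring R] [LinearOrder R] [IsStrictOrderedRing R] (x y : ι → R) :
    ∃ i, x ⬝ᵥ y ≤ (∑ j, |x j|) * |y i| := by
  obtain ⟨i, hi⟩ := Finite.exists_max fun j => |y j|
  refine ⟨i, ?_⟩
  calc x ⬝ᵥ y ≤ ∑ j, |x j| * |y j| :=
        Finset.sum_le_sum fun j _ => (le_abs_self _).trans_eq (abs_mul _ _)
    _ ≤ ∑ j, |x j| * |y i| :=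
        Finset.sum_le_sum fun j _ => mul_le_mul_of_nonneg_left (hi j) (abs_nonneg _)
    _ = (∑ j, |x j|) * |y i| := (Finset.sum_mul ..).symm

section StandardBasis

variable {n t : ℕ} {A : Matrix (Fin n) (Fin n) ℝ} {x y v : Fin n → ℝ}

theorem sqrt_mul_l2norm (c : ℝ) (x : Fin n → ℝ) : √c * l2norm x = √(c * (x ⬝ᵥ x)) := by
  simp only [l2norm, sq]
  exact (Real.sqrt_mul' c (dotProduct_star_self_nonneg x)).symm

theorem l2norm_single_one (i : Fin n) : l2norm (Pi.single i 1) = 1 := by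
  simp [l2norm, Pi.single_apply]

theorem SparseVec.l1norm_le (hv : SparseVec t v) : l1norm v ≤ √t * l2norm v := by
  let s : Finset (Fin n) := {i | v i ≠ 0}
  have hcard : s.card ≤ t := by
    rwa [SparseVec, ← Finset.coe_filter_univ, Set.ncard_coe_finset] at hv
  have hsupp : l1norm v = ∑ i ∈ s, |v i| :=
    (Finset.sum_filter_of_ne fun i _ hi => abs_ne_zero.1 hi).symm
  rw [l2norm, ← Real.sqrt_mul t.cast_nonneg]
  apply Real.le_sqrt_of_sq_le
  calc l1norm v ^ 2 ≤ s.card * ∑ i ∈ s, |v i| ^ 2 := hsupp ▸ sq_sum_le_card_mul_sum_sq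
    _ ≤ t * ∑ i, v i ^ 2 := by
      simp only [sq_abs]
      gcongr
      exact Finset.subset_univ s

theorem normSigma_le_of_eigenvalues_le (hA : A.IsHermitian) {c : ℝ}
    (hc : ∀ i, hA.eigenvalues i ≤ c) (x : Fin n → ℝ) : normSigma A x ≤ √c * l2norm x := by
  rw [sqrt_mul_l2norm]
  exact Real.sqrt_le_sqrt (star_dotProduct_mulVec_le_of_eigenvalues_le hA hc x)

theorem sqrt_mul_l2norm_le_of_le_eigenvalues (hA : A.IsHermitian) {c : ℝ}
    (hc : ∀ i, c ≤ hA.eigenvalues i) (x : Fin n → ℝ) : √c * l2norm x ≤ normSigma A x := by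
  rw [sqrt_mul_l2norm]
  exact Real.sqrt_le_sqrt (mul_star_dotProduct_le_of_le_eigenvalues hA hc x)

theorem normSigma_mul_l2norm_le (hA : A.IsHermitian) {κ : ℝ} (hκ : 0 ≤ κ)
    (hcond : ∀ i j, hA.eigenvalues i ≤ κ * hA.eigenvalues j) (x y : Fin n → ℝ) :
    normSigma A x * l2norm y ≤ √κ * normSigma A y * l2norm x := by
  rcases isEmpty_or_nonempty (Fin n) with _ | _
  · simp [l2norm]
  obtain ⟨j, hj⟩ := Finite.exists_min hA.eigenvalues
  calc normSigma A x * l2norm y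
      ≤ √(κ * hA.eigenvalues j) * l2norm x * l2norm y := by
        gcongr
        · exact Real.sqrt_nonneg _
        · exact normSigma_le_of_eigenvalues_le hA (hcond · j) x
    _ = √κ * (√(hA.eigenvalues j) * l2norm y) * l2norm x := by
        rw [Real.sqrt_mul hκ]
        ring
    _ ≤ √κ * normSigma A y * l2norm x := by
        gcongr
        · exact Real.sqrt_nonneg _
        · exact sqrt_mul_l2norm_le_of_le_eigenvalues hA hj y

theorem innerSigma_eq_dotProduct_single (A : Matrix (Fin n) (Fin n) ℝ) (x y : Fin n → ℝ) :
    innerSigma A x y = y ⬝ᵥ fun i => innerSigma A x (Pi.single i 1) := by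
  simp only [innerSigma, dotProduct_mulVec, dotProduct_single_one, dotProduct_comm y]

theorem normSigma_pos_of_innerSigma_ne_zero (hA : A.PosSemidef) (hxy : innerSigma A x y ≠ 0) :
    0 < normSigma A y := by
  have hy : innerSigma A y y ≠ 0 := fun h =>
    hxy (by rw [innerSigma, (hA.dotProduct_mulVec_zero_iff y).1 h, dotProduct_zero])
  exact Real.sqrt_pos.2 ((hA.dotProduct_mulVec_nonneg y).lt_of_ne' hy)

theorem exists_normSigma_sq_le (hA : A.PosSemidef) (hv : 0 < normSigma A v) :
    ∃ i, 0 < normSigma A (Pi.single i 1) ∧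
      normSigma A v ^ 2 ≤ l1norm v * |innerSigma A v (Pi.single i 1)| := by
  have hinner : 0 < innerSigma A v v := Real.sqrt_pos.1 hv
  have : Nonempty (Fin n) := by
    by_contra! h
    simp [innerSigma] at hinner
  obtain ⟨i, hi⟩ :=
    exists_dotProduct_le_sum_abs_mul_abs v fun i => innerSigma A v (Pi.single i 1)
  rw [← innerSigma_eq_dotProduct_single] at hi
  refine ⟨i, normSigma_pos_of_innerSigma_ne_zero (x := v) hA fun h => ?_, ?_⟩
  · simp only [h, abs_zero, mul_zero] at hi
    exact hinner.not_ge hi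
  · rwa [normSigma, Real.sq_sqrt hinner.le]

theorem stmt2_general (hA : A.PosSemidef) {κ : ℝ}
    (hκ : ∀ v, SparseVec t v → ∀ i,
      normSigma A (Pi.single i 1) * l2norm v ≤ √κ * normSigma A v) :
    IsDictionary t (1 / √(κ * t)) A fun i : Fin n => Pi.single i 1 := by
  intro v hsparse hv
  obtain ⟨i, hi, hmax⟩ := exists_normSigma_sq_le hA hv
  refine ⟨i, hi, ?_⟩
  set e : Fin n → ℝ := Pi.single i 1
  rw [one_div_mul_eq_div]
  refine div_le_of_le_mul₀ (Real.sqrt_nonneg _) (abs_nonneg _) (le_of_mul_le_mul_left ?_ hv)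
  calc normSigma A v * (normSigma A v * normSigma A e)
      = normSigma A v ^ 2 * normSigma A e := by ring
    _ ≤ √t * l2norm v * |innerSigma A v e| * normSigma A e := by
        gcongr
        exact hmax.trans (by gcongr; exact hsparse.l1norm_le)
    _ = √t * |innerSigma A v e| * (normSigma A e * l2norm v) := by ring
    _ ≤ √t * |innerSigma A v e| * (√κ * normSigma A v) :=
        mul_le_mul_of_nonneg_left (hκ v hsparse i) (by positivity)
    _ = normSigma A v * (|innerSigma A v e| * √(κ * t)) := by
        rw [Real.sqrt_mul' κ t.cast_nonneg]
        ring

end StandardBasis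

/-- if λ_max(Σ)/λ_min(Σ) ≤ κ then the standard basis is a
(t, 1/√(κt))-dictionary for Σ. -/
theorem stmt2 (n t : ℕ) (ht : 1 ≤ t) (κ : ℝ) (hκ : 0 < κ)
    (A : Matrix (Fin n) (Fin n) ℝ) (hA : A.PosDef)
    (hcond : ∀ i j, hA.1.eigenvalues i ≤ κ * hA.1.eigenvalues j) :
    IsDictionary t (1 / Real.sqrt (κ * t)) A (fun i : Fin n => (Pi.single i 1 : Fin n → ℝ)) :=
  stmt2_general hA.posSemidef fun v _ i => by
    simpa [l2norm_single_one] using normSigma_mul_l2norm_le hA.1 hκ.le hcond (Pi.single i 1) v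
end
end

section
/- Let n ∈ ℕ, let V ⊆ ℝⁿ be a linear subspace with d := dim V, let α > 0, and define S := {i ∈ [n] : sup_{x ∈ V, x ≠ 0} xᵢ/‖x‖₂ ≥ α}. Then |S| ≤ d/α². -/
open Matrix MeasureTheory ProbabilityTheory
open scoped BigOperators ENNReal

noncomputable section

/-! The supremum attached to the coordinate `i` is at most the length of the projection of the basis
vector `eᵢ` onto `V`, since `⟪eᵢ, x⟫ = ⟪P eᵢ, x⟫` for `x ∈ V`. The squares of these lengths sum to
`tr P = dim V` (to at most `dim V` for a general orthonormal family, by Bessel's inequality), so at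
most `dim V / α ^ 2` of them can be as large as `α ^ 2`. -/

section

open scoped InnerProductSpace

theorem finite_and_ncard_setOf_le_le_div {ι : Type*} {f : ι → ℝ} {c ε : ℝ} (hf : ∀ i, 0 ≤ f i)
    (hε : 0 < ε) (hc : ∀ s : Finset ι, ∑ i ∈ s, f i ≤ c) :
    {i | ε ≤ f i}.Finite ∧ ({i | ε ≤ f i}.ncard : ℝ) ≤ c / ε := by
  have hfin : {i | ε ≤ f i}.Finite := by
    have h_lt : ∀ᶠ i in Filter.cofinite, f i < ε :=
      (summable_of_sum_le hf hc).tendsto_cofinite_zero.eventually_lt_const hε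
    simpa only [Filter.eventually_cofinite, not_lt] using h_lt
  refine ⟨hfin, ?_⟩
  rw [le_div_iff₀ hε, Set.ncard_eq_toFinset_card _ hfin, ← nsmul_eq_mul]
  exact (Finset.card_nsmul_le_sum _ f ε fun i hi ↦ hfin.mem_toFinset.mp hi).trans (hc _)

variable {𝕜 E ι : Type*} [RCLike 𝕜] [NormedAddCommGroup E] [InnerProductSpace 𝕜 E]

theorem norm_sq_starProjection_eq_sum [Fintype ι] {V : Submodule 𝕜 E} [V.HasOrthogonalProjection]
    (b : OrthonormalBasis ι 𝕜 V) (u : E) :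
    ‖V.starProjection u‖ ^ 2 = ∑ k, ‖⟪(b k : E), u⟫_𝕜‖ ^ 2 := by
  rw [V.starProjection_apply, Submodule.norm_coe, ← b.sum_sq_norm_inner_right]
  simp only [Submodule.inner_orthogonalProjectionOnto_eq_of_mem_left]

theorem sum_norm_sq_starProjection_le_finrank {v : ι → E} (hv : Orthonormal 𝕜 v)
    (V : Submodule 𝕜 E) [FiniteDimensional 𝕜 V] (s : Finset ι) :
    ∑ i ∈ s, ‖V.starProjection (v i)‖ ^ 2 ≤ Module.finrank 𝕜 V := by
  let b := stdOrthonormalBasis 𝕜 V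
  calc ∑ i ∈ s, ‖V.starProjection (v i)‖ ^ 2
      = ∑ k, ∑ i ∈ s, ‖⟪v i, (b k : E)⟫_𝕜‖ ^ 2 := by
        simp only [norm_sq_starProjection_eq_sum b, norm_inner_symm (b _ : E)]
        exact Finset.sum_comm
    _ ≤ ∑ k, ‖(b k : E)‖ ^ 2 := Finset.sum_le_sum fun k _ ↦ hv.sum_inner_products_le (b k : E)
    _ = Module.finrank 𝕜 V := by simp [Submodule.norm_coe]

theorem re_inner_le_norm_starProjection_mul_norm (V : Submodule 𝕜 E) [V.HasOrthogonalProjection]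
    (u : E) {x : E} (hx : x ∈ V) : RCLike.re ⟪u, x⟫_𝕜 ≤ ‖V.starProjection u‖ * ‖x‖ := by
  have h_inner : ⟪V.starProjection u, x⟫_𝕜 = ⟪u, x⟫_𝕜 := by
    rw [V.inner_starProjection_left_eq_right, V.starProjection_eq_self_iff.mpr hx]
  exact h_inner ▸ re_inner_le_norm _ _

theorem sSup_re_inner_div_norm_le_norm_starProjection (V : Submodule 𝕜 E)
    [V.HasOrthogonalProjection] (u : E) :
    sSup ((fun x ↦ RCLike.re ⟪u, x⟫_𝕜 / ‖x‖) '' {x | x ∈ V ∧ x ≠ 0}) ≤ ‖V.starProjection u‖ := by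
  refine Real.sSup_le ?_ (norm_nonneg _)
  rintro _ ⟨x, ⟨hxV, hx0⟩, rfl⟩
  exact (div_le_iff₀ (norm_pos_iff.mpr hx0)).mpr (re_inner_le_norm_starProjection_mul_norm V u hxV)

-- As `V` is stable under multiplication by scalars of norm one, the supremum is also that of
-- `‖⟪v i, x⟫‖ / ‖x‖`.
theorem stmt3_general {v : ι → E} (hv : Orthonormal 𝕜 v) (V : Submodule 𝕜 E)
    [FiniteDimensional 𝕜 V] {α : ℝ} (hα : 0 < α) :
    {i | α ≤ sSup ((fun x ↦ RCLike.re ⟪v i, x⟫_𝕜 / ‖x‖) '' {x | x ∈ V ∧ x ≠ 0})}.Finite ∧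
      ({i | α ≤ sSup ((fun x ↦ RCLike.re ⟪v i, x⟫_𝕜 / ‖x‖) '' {x | x ∈ V ∧ x ≠ 0})}.ncard : ℝ)
        ≤ Module.finrank 𝕜 V / α ^ 2 := by
  obtain ⟨hfin, hcard⟩ := finite_and_ncard_setOf_le_le_div
    (fun i ↦ sq_nonneg ‖V.starProjection (v i)‖) (pow_pos hα 2)
    (sum_norm_sq_starProjection_le_finrank hv V)
  have hsub : {i | α ≤ sSup ((fun x ↦ RCLike.re ⟪v i, x⟫_𝕜 / ‖x‖) '' {x | x ∈ V ∧ x ≠ 0})} ⊆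
      {i | α ^ 2 ≤ ‖V.starProjection (v i)‖ ^ 2} := fun i hi ↦
    pow_le_pow_left₀ hα.le (hi.trans (sSup_re_inner_div_norm_le_norm_starProjection V (v i))) 2
  exact ⟨hfin.subset hsub, (Nat.cast_le.mpr (Set.ncard_le_ncard hsub hfin)).trans hcard⟩

end

/-- the set of coordinates on which some unit vector of a `d`-dimensional
subspace `V` has value at least `α` has size at most `d/α²`. -/
theorem stmt3 (n : ℕ) (V : Submodule ℝ (EuclideanSpace ℝ (Fin n))) (α : ℝ) (hα : 0 < α) :
    (({i : Fin n |
        α ≤ sSup ((fun x : EuclideanSpace ℝ (Fin n) => x i / ‖x‖) '' {x | x ∈ V ∧ x ≠ 0})}).ncard : ℝ)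
      ≤ (Module.finrank ℝ V : ℝ) / α ^ 2 := by
  simpa [EuclideanSpace.inner_single_left] using
    (stmt3_general (EuclideanSpace.basisFun (Fin n) ℝ).orthonormal V hα).2
end
end

section
/- Let n, t ∈ ℕ with t ≥ 1, let P be an n×n real orthogonal projection matrix (P = Pᵀ and P² = P), let τ ≥ 1 be a real number, and let K ⊆ [n]. Suppose that (a) Pᵢᵢ ≥ 1 − 1/(9t²) for all i ∈ [n] \ K, and (b) |supp(v) \ K| ≤ τ for every v ∈ B₀(t) ∩ 𝒲_{P,K}. Then there exists a set I ⊆ [n] with |I| ≤ 36t²·|K| such that |supp(v) \ (I ∪ K)| ≤ τ − 1 for every v ∈ B₀(t) ∩ 𝒲_{P,K}. -/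
open Matrix MeasureTheory ProbabilityTheory
open scoped BigOperators ENNReal

noncomputable section

/-- restriction of `v` to coordinates outside `K` (zero on `K`). -/
def restrictOut {k : ℕ} (K : Finset (Fin k)) (v : Fin k → ℝ) : Fin k → ℝ :=
  fun i => if i ∈ K then 0 else v i

/-- 𝒲_{P,K} := {v : ‖v_{Kᶜ}‖₂ > 3√(vᵀPv)}. -/
def Wset {k : ℕ} (P : Matrix (Fin k) (Fin k) ℝ) (K : Finset (Fin k)) : Set (Fin k → ℝ) :=
  {v | 3 * Real.sqrt (v ⬝ᵥ (P *ᵥ v)) < l2norm (restrictOut K v)}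

/-!
Write `d` for the part of `v` on `K` and `w = v - d`. Since `0 ≤ P ≤ 1` gives `P² ≤ P`, expanding
`‖w + P d‖²` shows that `w` lies within squared distance `wᵀ(1 - P)w + vᵀPv` of the space `P(ℝᴷ)`.
The first term is at most `‖w‖² / 9` by Cauchy–Schwarz, because `w` is sparse and the diagonal of
`1 - P` is small off `K`; the second is at most `‖w‖² / 9` because `v ∈ 𝒲`. Hence `w` has at least
`7/9` of its squared norm in a space of dimension at most `|K|`, and Bessel's inequality allows at
most `9/7 · |K|` such `w` with pairwise disjoint supports. Take `I` to be the union of the supports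
in a maximal disjoint family: by maximality every other support meets `I`, so it loses a point.
-/

section InnerProductSpace

open scoped InnerProductSpace

variable {𝕜 E : Type*} [RCLike 𝕜] [NormedAddCommGroup E] [InnerProductSpace 𝕜 E]

section Bessel

variable {κ : Type*} [Fintype κ] (V : Submodule 𝕜 E) [FiniteDimensional 𝕜 V]

lemma sum_norm_sq_starProjection_le_finrank_s4 {w : κ → E} (hw : Orthonormal 𝕜 w) :
    ∑ i, ‖V.starProjection (w i)‖ ^ 2 ≤ Module.finrank 𝕜 V := by
  let b := stdOrthonormalBasis 𝕜 V
  calc ∑ i, ‖V.starProjection (w i)‖ ^ 2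
      = ∑ i, ∑ j, ‖⟪w i, (b j : E)⟫_𝕜‖ ^ 2 := by
        refine Finset.sum_congr rfl fun i _ ↦ ?_
        rw [V.starProjection_apply, Submodule.norm_coe, ← b.sum_sq_norm_inner_left]
        simp only [Submodule.inner_orthogonalProjectionOnto_eq_of_mem_right]
    _ = ∑ j, ∑ i, ‖⟪w i, (b j : E)⟫_𝕜‖ ^ 2 := Finset.sum_comm
    _ ≤ ∑ j, ‖(b j : E)‖ ^ 2 := Finset.sum_le_sum fun j _ ↦ hw.sum_inner_products_le (b j : E)
    _ = Module.finrank 𝕜 V := by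
        simp only [Submodule.norm_coe, b.norm_eq_one, one_pow, Finset.sum_const, Finset.card_univ,
          Fintype.card_fin, nsmul_eq_mul, mul_one]

lemma mul_card_le_finrank_of_mul_norm_sq_le {w : κ → E} (hne : ∀ i, w i ≠ 0)
    (horth : Pairwise fun i j ↦ ⟪w i, w j⟫_𝕜 = 0) {c : ℝ}
    (hc : ∀ i, c * ‖w i‖ ^ 2 ≤ ‖V.starProjection (w i)‖ ^ 2) :
    c * Fintype.card κ ≤ Module.finrank 𝕜 V := by
  have hnorm : ∀ i, ‖w i‖ ≠ 0 := fun i ↦ norm_ne_zero_iff.mpr (hne i)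
  have horthonormal : Orthonormal 𝕜 fun i ↦ ((‖w i‖⁻¹ : ℝ) : 𝕜) • w i := by
    refine ⟨fun i ↦ ?_, fun i j hij ↦ ?_⟩
    · simp [norm_smul, hnorm i]
    · simp only [inner_smul_left, inner_smul_right, horth hij, mul_zero]
  calc c * Fintype.card κ = ∑ _i : κ, c := by
        rw [Finset.sum_const, Finset.card_univ, nsmul_eq_mul, mul_comm]
    _ ≤ ∑ i, ‖V.starProjection (((‖w i‖⁻¹ : ℝ) : 𝕜) • w i)‖ ^ 2 := by
        refine Finset.sum_le_sum fun i _ ↦ ?_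
        rw [map_smul, norm_smul, mul_pow, RCLike.norm_ofReal, sq_abs, inv_pow, inv_mul_eq_div,
          le_div_iff₀ (pow_pos (norm_pos_iff.mpr (hne i)) 2)]
        exact hc i
    _ ≤ Module.finrank 𝕜 V := sum_norm_sq_starProjection_le_finrank_s4 V horthonormal

end Bessel

lemma norm_sq_le_re_inner_of_isPositive {T : E →ₗ[𝕜] E} (hT : T.IsPositive)
    (hT' : (1 - T).IsPositive) (y : E) : ‖T y‖ ^ 2 ≤ RCLike.re ⟪T y, y⟫_𝕜 := by
  have hTy := hT'.2 (T y)
  have hy := hT.2 (y - T y)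
  have hsymm : ⟪T (T y), y⟫_𝕜 = ⟪T y, T y⟫_𝕜 := hT.isSymmetric (T y) y
  simp only [LinearMap.sub_apply, Module.End.one_apply, map_sub, inner_sub_left, inner_sub_right,
    hsymm, inner_self_eq_norm_sq] at hTy hy
  linarith

lemma re_inner_sub_re_inner_le_norm_sq_starProjection (V : Submodule 𝕜 E)
    [V.HasOrthogonalProjection] {T : E →ₗ[𝕜] E} (hT : T.IsPositive) (hT' : (1 - T).IsPositive)
    {x w : E} (hV : T (x - w) ∈ V) :
    RCLike.re ⟪T w, w⟫_𝕜 - RCLike.re ⟪T x, x⟫_𝕜 ≤ ‖V.starProjection w‖ ^ 2 := by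
  set u := T (x - w)
  have hproj : ⟪V.starProjection w, u⟫_𝕜 = ⟪w, u⟫_𝕜 := by
    rw [V.inner_starProjection_left_eq_right, V.starProjection_eq_self_iff.mpr hV]
  have hexpand : RCLike.re ⟪T x, x⟫_𝕜
      = RCLike.re ⟪T w, w⟫_𝕜 + 2 * RCLike.re ⟪w, u⟫_𝕜 + RCLike.re ⟪u, x - w⟫_𝕜 := by
    have hx : x = w + (x - w) := by abel
    have hre : RCLike.re ⟪T w, x - w⟫_𝕜 = RCLike.re ⟪w, u⟫_𝕜 :=
      congrArg _ (hT.isSymmetric w (x - w))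
    have hre' : RCLike.re ⟪u, w⟫_𝕜 = RCLike.re ⟪w, u⟫_𝕜 := inner_re_symm u w
    have hTx : T x = T w + u := by rw [← map_add, ← hx]
    conv_lhs => rw [hTx]; arg 2; rw [hx]
    simp only [inner_add_left, inner_add_right, map_add]
    linarith
  calc RCLike.re ⟪T w, w⟫_𝕜 - RCLike.re ⟪T x, x⟫_𝕜
      = -(2 * RCLike.re ⟪w, u⟫_𝕜) - RCLike.re ⟪u, x - w⟫_𝕜 := by rw [hexpand]; ring
    _ ≤ -(2 * RCLike.re ⟪w, u⟫_𝕜) - ‖u‖ ^ 2 :=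
        sub_le_sub_left (norm_sq_le_re_inner_of_isPositive hT hT' _) _
    _ = ‖V.starProjection w‖ ^ 2 - ‖V.starProjection w + u‖ ^ 2 := by
        rw [@norm_add_sq 𝕜, hproj]; ring
    _ ≤ ‖V.starProjection w‖ ^ 2 := sub_le_self _ (sq_nonneg _)

end InnerProductSpace

section Matrix

variable {ι : Type*} [Fintype ι]

open scoped MatrixOrder in
lemma posSemidef_of_isStarProjection {Q : Matrix ι ι ℝ} (hQ : IsStarProjection Q) :
    Q.PosSemidef :=
  hQ.nonneg.posSemidef

open scoped MatrixOrder in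
lemma dotProduct_mulVec_le_ncard_support_mul_sum {Q : Matrix ι ι ℝ} (hQ : Q.PosSemidef)
    (x : ι → ℝ) :
    x ⬝ᵥ Q *ᵥ x ≤ (Function.support x).ncard * ∑ i, Q i i * x i ^ 2 := by
  classical
  obtain ⟨B, rfl⟩ := CStarAlgebra.nonneg_iff_eq_star_mul_self.mp hQ.nonneg
  set S : Finset ι := {i | x i ≠ 0}
  have hS : (Function.support x).ncard = S.card := by
    rw [← Set.ncard_coe_finset]; simp [S, Function.support]
  have hrow : ∀ k, (B *ᵥ x) k ^ 2 ≤ S.card * ∑ i, (B k i * x i) ^ 2 := fun k ↦ by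
    have hsum : (B *ᵥ x) k = ∑ i ∈ S, B k i * x i := by
      refine (Finset.sum_subset (Finset.subset_univ S) fun i _ hi ↦ ?_).symm
      simp_all [S]
    rw [hsum]
    refine sq_sum_le_card_mul_sum_sq.trans ?_
    gcongr
    exact Finset.subset_univ S
  calc x ⬝ᵥ (star B * B) *ᵥ x = ∑ k, (B *ᵥ x) k ^ 2 := by
        rw [star_eq_conjTranspose, ← mulVec_mulVec, dotProduct_mulVec,
          conjTranspose_eq_transpose_of_trivial, vecMul_transpose]
        simp only [dotProduct, sq]
    _ ≤ ∑ k, S.card * ∑ i, (B k i * x i) ^ 2 := Finset.sum_le_sum fun k _ ↦ hrow k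
    _ = (Function.support x).ncard * ∑ i, (star B * B) i i * x i ^ 2 := by
        rw [← Finset.mul_sum, Finset.sum_comm, hS]
        simp only [mul_apply, star_apply, star_trivial, Finset.sum_mul, mul_pow, sq (B _ _)]

lemma dotProduct_mulVec_le_of_ncard_support_le {Q : Matrix ι ι ℝ} (hQ : Q.PosSemidef)
    {x : ι → ℝ} {t : ℕ} (hx : (Function.support x).ncard ≤ t) {c : ℝ}
    (hc : ∀ i ∈ Function.support x, t * Q i i ≤ c) :
    x ⬝ᵥ Q *ᵥ x ≤ c * ∑ i, x i ^ 2 := by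
  calc x ⬝ᵥ Q *ᵥ x ≤ (Function.support x).ncard * ∑ i, Q i i * x i ^ 2 :=
        dotProduct_mulVec_le_ncard_support_mul_sum hQ x
    _ ≤ t * ∑ i, Q i i * x i ^ 2 := by
        gcongr
        exact Finset.sum_nonneg fun i _ ↦ mul_nonneg hQ.diag_nonneg (sq_nonneg _)
    _ = ∑ i, t * Q i i * x i ^ 2 := by simp only [Finset.mul_sum, mul_assoc]
    _ ≤ ∑ i, c * x i ^ 2 := by
        refine Finset.sum_le_sum fun i _ ↦ ?_
        by_cases hi : x i = 0
        · simp [hi]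
        · exact mul_le_mul_of_nonneg_right (hc i hi) (sq_nonneg _)
    _ = c * ∑ i, x i ^ 2 := (Finset.mul_sum ..).symm

lemma inner_toLp_eq_zero_of_disjoint_support {x y : ι → ℝ}
    (h : Disjoint (Function.support x) (Function.support y)) :
    inner ℝ (WithLp.toLp 2 x) (WithLp.toLp 2 y) = 0 := by
  rw [PiLp.inner_apply]
  refine Finset.sum_eq_zero fun i _ ↦ ?_
  by_cases hx : x i = 0
  · simp [hx]
  · have hy : y i = 0 := Function.notMem_support.mp (Set.disjoint_left.mp h hx)
    simp [hy]

variable [DecidableEq ι]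

lemma inner_toEuclideanLin_self (Q : Matrix ι ι ℝ) (x : ι → ℝ) :
    inner ℝ (toEuclideanLin Q (WithLp.toLp 2 x)) (WithLp.toLp 2 x) = x ⬝ᵥ Q *ᵥ x := by
  rw [real_inner_comm, ← coe_toEuclideanCLM_eq_toEuclideanLin]
  exact inner_toEuclideanCLM Q _ _

/-- The image `Q(ℝᴷ)` of the coordinate subspace of `K`, encoded as the span of the columns of `Q`
indexed by `K`. Every relevant vector turns out to be close to this space. -/
def columnSpan (Q : Matrix ι ι ℝ) (K : Finset ι) : Submodule ℝ (EuclideanSpace ℝ ι) :=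
  Submodule.span ℝ ((fun i ↦ toEuclideanLin Q (EuclideanSpace.single i 1)) '' K)

lemma finrank_columnSpan_le (Q : Matrix ι ι ℝ) (K : Finset ι) :
    Module.finrank ℝ (columnSpan Q K) ≤ K.card := by
  classical
  rw [columnSpan, ← Finset.coe_image]
  exact (finrank_span_finset_le_card _).trans Finset.card_image_le

lemma toEuclideanLin_mem_columnSpan (Q : Matrix ι ι ℝ) {K : Finset ι} {x : EuclideanSpace ℝ ι}
    (hx : ∀ i ∉ K, x i = 0) : toEuclideanLin Q x ∈ columnSpan Q K := by
  have hsum : toEuclideanLin Q x =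
      ∑ i, x i • toEuclideanLin Q (EuclideanSpace.single i 1) := by
    conv_lhs => rw [← (EuclideanSpace.basisFun ι ℝ).sum_repr x, map_sum]
    simp only [EuclideanSpace.basisFun_repr, EuclideanSpace.basisFun_apply, map_smul]
  rw [hsum]
  refine Submodule.sum_mem _ fun i _ ↦ ?_
  by_cases hi : i ∈ K
  · exact Submodule.smul_mem _ _ (Submodule.subset_span ⟨i, hi, rfl⟩)
  · simp only [hx i hi, zero_smul, Submodule.zero_mem]

end Matrix

section DisjointFamily

lemma exists_finset_pairwiseDisjoint_inter_biUnion_nonempty {α κ : Type*} [Finite α]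
    (f : κ → Set α) (A : Set κ) (hne : ∀ a ∈ A, (f a).Nonempty) :
    ∃ M : Finset κ, ↑M ⊆ A ∧ (M : Set κ).PairwiseDisjoint f ∧
      ∀ a ∈ A, (f a ∩ ⋃ b ∈ M, f b).Nonempty := by
  -- With the constant size function `0`, Vitali's selection lemma yields a maximal disjoint family.
  obtain ⟨M, hMA, hdisj, hmeet⟩ := Vitali.exists_disjoint_subfamily_covering_enlargement f A
    (fun _ ↦ 0) 2 one_lt_two (fun _ _ ↦ le_rfl) 0 (fun _ _ ↦ le_rfl) hne
  have hfin : M.Finite := by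
    refine (hdisj.finite_biUnion_iff.mp (Set.toFinite _)).2.subset fun a ha ↦ ?_
    exact ⟨ha, hne a (hMA ha)⟩
  lift M to Finset κ using hfin
  refine ⟨M, hMA, hdisj, fun a ha ↦ ?_⟩
  obtain ⟨b, hb, hab, -⟩ := hmeet a ha
  exact hab.mono (Set.inter_subset_inter_right _ (Set.subset_biUnion_of_mem (u := f) hb))

lemma ncard_sdiff_add_one_le_of_inter_nonempty {α : Type*} [Finite α] {s u : Set α}
    (h : (s ∩ u).Nonempty) : (s \ u).ncard + 1 ≤ s.ncard := by
  rw [← Set.ncard_inter_add_ncard_sdiff_eq_ncard s u, add_comm]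
  exact Nat.add_le_add_right h.ncard_pos _

end DisjointFamily

section Peeling

variable {n t : ℕ} {P : Matrix (Fin n) (Fin n) ℝ} {K : Finset (Fin n)} {v : Fin n → ℝ}

lemma support_restrictOut (K : Finset (Fin n)) (v : Fin n → ℝ) :
    Function.support (restrictOut K v) = {i | v i ≠ 0} \ K := by
  ext i
  simp [restrictOut, and_comm]

lemma l2norm_eq_norm_toLp (v : Fin n → ℝ) : l2norm v = ‖WithLp.toLp 2 v‖ := by
  simp [l2norm, EuclideanSpace.norm_eq]

lemma restrictOut_ne_zero_of_mem_Wset (hv : v ∈ Wset P K) : restrictOut K v ≠ 0 := by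
  intro h
  have hlt : 3 * √(v ⬝ᵥ P *ᵥ v) < l2norm (restrictOut K v) := hv
  have hzero : l2norm (0 : Fin n → ℝ) = 0 := by simp [l2norm]
  rw [h, hzero] at hlt
  exact hlt.not_ge (by positivity)

lemma mul_dotProduct_mulVec_le_of_mem_Wset (hP : P.PosSemidef) (hv : v ∈ Wset P K) :
    9 * (v ⬝ᵥ P *ᵥ v) ≤ l2norm (restrictOut K v) ^ 2 := by
  have hlt : 3 * √(v ⬝ᵥ P *ᵥ v) < l2norm (restrictOut K v) := hv
  have hnonneg : 0 ≤ v ⬝ᵥ P *ᵥ v := hP.dotProduct_mulVec_nonneg v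
  calc 9 * (v ⬝ᵥ P *ᵥ v) = (3 * √(v ⬝ᵥ P *ᵥ v)) ^ 2 := by
        rw [mul_pow, Real.sq_sqrt hnonneg]; norm_num
    _ ≤ l2norm (restrictOut K v) ^ 2 := by gcongr

lemma mul_l2norm_sq_restrictOut_le (hP' : (1 - P).PosSemidef)
    (hdiag : ∀ i ∉ K, 9 * (t : ℝ) * (1 - P i i) ≤ 1) (hv : SparseVec t v) :
    8 * l2norm (restrictOut K v) ^ 2 ≤
      9 * (restrictOut K v ⬝ᵥ P *ᵥ restrictOut K v) := by
  set w := restrictOut K v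
  have hsupp : Function.support w = {i | v i ≠ 0} \ K := support_restrictOut K v
  have hcard : (Function.support w).ncard ≤ t :=
    hsupp ▸ (Set.ncard_le_ncard Set.sdiff_subset).trans hv
  have hl2 : l2norm w ^ 2 = ∑ i, w i ^ 2 :=
    Real.sq_sqrt (Finset.sum_nonneg fun i _ ↦ sq_nonneg _)
  have hcompl : w ⬝ᵥ (1 - P) *ᵥ w ≤ 1 / 9 * ∑ i, w i ^ 2 := by
    refine dotProduct_mulVec_le_of_ncard_support_le hP' hcard fun i hi ↦ ?_
    have hiK : i ∉ K := (hsupp ▸ hi).2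
    rw [Matrix.sub_apply, one_apply_eq]
    linarith [hdiag i hiK]
  have hself : w ⬝ᵥ w = ∑ i, w i ^ 2 := by simp only [dotProduct, sq]
  rw [sub_mulVec, one_mulVec, dotProduct_sub, hself] at hcompl
  linarith

lemma mul_norm_sq_restrictOut_le_norm_sq_starProjection (hP : P.PosSemidef)
    (hP' : (1 - P).PosSemidef) (hdiag : ∀ i ∉ K, 9 * (t : ℝ) * (1 - P i i) ≤ 1)
    (hv : SparseVec t v) (hW : v ∈ Wset P K) :
    7 / 9 * ‖WithLp.toLp 2 (restrictOut K v)‖ ^ 2 ≤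
      ‖(columnSpan P K).starProjection (WithLp.toLp 2 (restrictOut K v))‖ ^ 2 := by
  set w := restrictOut K v with hw
  set T := toEuclideanLin P
  have hT : T.IsPositive := isPositive_toEuclideanLin_iff.mpr hP
  have hT' : (1 - T).IsPositive := by
    have h := isPositive_toEuclideanLin_iff.mpr hP'
    rwa [map_sub, toLpLin_one] at h
  have hV : T (WithLp.toLp 2 v - WithLp.toLp 2 w) ∈ columnSpan P K :=
    toEuclideanLin_mem_columnSpan P fun i hi ↦ by simp [hw, restrictOut, hi]
  have hproj := re_inner_sub_re_inner_le_norm_sq_starProjection (columnSpan P K) hT hT' hV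
  simp only [RCLike.re_to_real, T, inner_toEuclideanLin_self] at hproj
  have hw_le := mul_l2norm_sq_restrictOut_le hP' hdiag hv
  have hv_le := mul_dotProduct_mulVec_le_of_mem_Wset hP hW
  rw [← l2norm_eq_norm_toLp]
  linarith

lemma mul_card_le_card_of_pairwiseDisjoint_support (hP : P.PosSemidef)
    (hP' : (1 - P).PosSemidef) (hdiag : ∀ i ∉ K, 9 * (t : ℝ) * (1 - P i i) ≤ 1)
    {M : Finset (Fin n → ℝ)} (hM : (M : Set (Fin n → ℝ)) ⊆ {v | SparseVec t v} ∩ Wset P K)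
    (hdisj : (M : Set (Fin n → ℝ)).PairwiseDisjoint fun v ↦ Function.support (restrictOut K v)) :
    7 / 9 * (M.card : ℝ) ≤ K.card := by
  have hcount := mul_card_le_finrank_of_mul_norm_sq_le (𝕜 := ℝ) (columnSpan P K)
    (w := fun v : M ↦ WithLp.toLp 2 (restrictOut K v)) (c := 7 / 9)
    (fun v ↦ (WithLp.toLp_eq_zero 2).not.mpr (restrictOut_ne_zero_of_mem_Wset (hM v.2).2))
    (fun v v' hne ↦ inner_toLp_eq_zero_of_disjoint_support
      (hdisj v.2 v'.2 (Subtype.coe_injective.ne hne)))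
    (fun v ↦ mul_norm_sq_restrictOut_le_norm_sq_starProjection hP hP' hdiag (hM v.2).1 (hM v.2).2)
  rw [Fintype.card_coe] at hcount
  exact hcount.trans (mod_cast finrank_columnSpan_le P K)

end Peeling

theorem stmt4_general (n t : ℕ) (P : Matrix (Fin n) (Fin n) ℝ) (hP : P.PosSemidef)
    (hP' : (1 - P).PosSemidef) (τ : ℝ) (K : Finset (Fin n))
    (hdiag : ∀ i ∉ K, 9 * (t : ℝ) * (1 - P i i) ≤ 1)
    (hb : ∀ v : Fin n → ℝ, SparseVec t v → v ∈ Wset P K →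
      (({i | v i ≠ 0} \ (K : Set (Fin n))).ncard : ℝ) ≤ τ) :
    ∃ I : Finset (Fin n), (I.card : ℝ) ≤ 9 / 7 * t * K.card ∧
      ∀ v : Fin n → ℝ, SparseVec t v → v ∈ Wset P K →
        (({i | v i ≠ 0} \ ((I : Set (Fin n)) ∪ (K : Set (Fin n)))).ncard : ℝ) ≤ τ - 1 := by
  classical
  obtain ⟨M, hM, hdisj, hmeet⟩ := exists_finset_pairwiseDisjoint_inter_biUnion_nonempty
    (fun v ↦ Function.support (restrictOut K v)) ({v | SparseVec t v} ∩ Wset P K)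
    fun v hv ↦ Function.support_nonempty_iff.mpr (restrictOut_ne_zero_of_mem_Wset hv.2)
  have hcard := mul_card_le_card_of_pairwiseDisjoint_support hP hP' hdiag hM hdisj
  simp only [support_restrictOut] at hmeet
  set U : Set (Fin n) := ⋃ v ∈ M, {i | v i ≠ 0} \ K
  have hU : U.ncard ≤ M.card * t := (Finset.set_ncard_biUnion_le M _).trans <|
    Finset.sum_le_card_nsmul M _ t fun v hv ↦ (Set.ncard_le_ncard Set.sdiff_subset).trans (hM hv).1
  refine ⟨U.toFinset, ?_, fun v hv hW ↦ ?_⟩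
  · calc (U.toFinset.card : ℝ) ≤ M.card * t := by
          rw [← Set.ncard_eq_toFinset_card']; exact_mod_cast hU
      _ ≤ (9 / 7 * K.card) * t := by gcongr; linarith
      _ = 9 / 7 * t * K.card := by ring
  · have hdrop := ncard_sdiff_add_one_le_of_inter_nonempty (hmeet v ⟨hv, hW⟩)
    rw [Set.coe_toFinset, Set.union_comm, ← Set.sdiff_sdiff, le_sub_iff_add_le]
    exact le_trans (mod_cast hdrop) (hb v hv hW)

lemma mul_mul_one_sub_le_one_of_le {t : ℕ} (ht : 1 ≤ t) {p : ℝ}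
    (hp : 1 - 1 / (9 * (t : ℝ) ^ 2) ≤ p) : 9 * (t : ℝ) * (1 - p) ≤ 1 := by
  have ht' : (1 : ℝ) ≤ t := mod_cast ht
  calc 9 * (t : ℝ) * (1 - p) ≤ 9 * t * (1 / (9 * t ^ 2)) := by gcongr; linarith
    _ = 1 / t := by field_simp
    _ ≤ 1 := div_le_one_of_le₀ ht' (by positivity)

/-- one step of iterative peeling. -/
theorem stmt4 (n t : ℕ) (ht : 1 ≤ t) (P : Matrix (Fin n) (Fin n) ℝ)
    (hsym : Pᵀ = P) (hproj : P * P = P) (τ : ℝ) (hτ : 1 ≤ τ) (K : Finset (Fin n))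
    (ha : ∀ i, i ∉ K → 1 - 1 / (9 * (t : ℝ) ^ 2) ≤ P i i)
    (hb : ∀ v : Fin n → ℝ, SparseVec t v → v ∈ Wset P K →
      (({i | v i ≠ 0} \ (K : Set (Fin n))).ncard : ℝ) ≤ τ) :
    ∃ I : Finset (Fin n), (I.card : ℝ) ≤ 36 * (t : ℝ) ^ 2 * K.card ∧
      ∀ v : Fin n → ℝ, SparseVec t v → v ∈ Wset P K →
        (({i | v i ≠ 0} \ ((I : Set (Fin n)) ∪ (K : Set (Fin n)))).ncard : ℝ) ≤ τ - 1 := by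
  have hP : IsStarProjection P := ⟨hproj, hsym⟩
  obtain ⟨I, hI, hpeel⟩ := stmt4_general n t P (posSemidef_of_isStarProjection hP)
    (posSemidef_of_isStarProjection hP.one_sub) τ K
    (fun i hi ↦ mul_mul_one_sub_le_one_of_le ht (ha i hi)) hb
  have ht' : (t : ℝ) ≤ (t : ℝ) ^ 2 := mod_cast Nat.le_self_pow two_ne_zero t
  exact ⟨I, hI.trans (by gcongr; norm_num), hpeel⟩
end
end

section
/- Let n, t, d ∈ ℕ with t ≥ 1 and d ≤ n − 1, and let Σ be an n×n positive semidefinite real matrix with eigenvalues λ₁ ≤ … ≤ λₙ and λ_{d+1} > 0. Then Σ has a (t, 7·√t·√(λₙ/λ_{d+1}))-ℓ1-representation of size at most n + t·(7t)^{2t²+t}·dᵗ. -/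
open Matrix MeasureTheory ProbabilityTheory
open scoped BigOperators ENNReal

noncomputable section

open Finset Module
open scoped InnerProductSpace

/-!
Let `V` be spanned by the eigenvectors of the `d` smallest eigenvalues, so that `‖v‖_Σ` is at least
`√λ_{d+1}` times the distance from `v` to `V`. Since `∑ i, ‖P e_i‖ ^ 2 = dim V` for the orthogonal
projection `P` onto `V`, few coordinates have a large projection, and a sparse vector avoiding them
has norm at most three times its distance to `V`. Collect these coordinates in `S`, replace `V` by
its image after erasing `S`, and repeat: in each round either the part of `v` off `S` satisfies
`‖v off S‖ ≤ 3 * dist(v, V)`, which later rounds preserve, or `S` captures a new coordinate of `v`.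
As `v` has at most `t` nonzero coordinates, `t + 1` rounds suffice, and then `#S ≤ 5 * t ^ 2 * d`.

Off `S`, use the standard basis: since `‖v off S‖ ≤ 3 * ‖v‖_Σ / √λ_{d+1}`, its cost is controlled
by Cauchy-Schwarz. On `S`, use a `Σ`-orthogonal basis of the span of each `t`-tuple of standard
basis vectors, for which Cauchy-Schwarz again bounds the cost, now by `√t * ‖v on S‖_Σ`.
-/

section OrthogonalSums

variable {𝕜 E : Type*} [RCLike 𝕜] [SeminormedAddCommGroup E] [InnerProductSpace 𝕜 E]

theorem norm_sq_sum_of_pairwise_inner_eq_zero {κ : Type*} {s : Finset κ} {w : κ → E}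
    (hw : (s : Set κ).Pairwise fun i j => ⟪w i, w j⟫_𝕜 = 0) :
    ‖∑ i ∈ s, w i‖ ^ 2 = ∑ i ∈ s, ‖w i‖ ^ 2 := by
  have hinner : ⟪∑ i ∈ s, w i, ∑ i ∈ s, w i⟫_𝕜 = ∑ i ∈ s, ⟪w i, w i⟫_𝕜 := by
    rw [sum_inner]
    refine sum_congr rfl fun i hi => ?_
    rw [inner_sum, sum_eq_single_of_mem i hi fun j hj hji => hw hi hj hji.symm]
  simp only [inner_self_eq_norm_sq_to_K] at hinner
  exact_mod_cast hinner

theorem sum_norm_le_sqrt_card_mul_norm_sum {κ : Type*} {s : Finset κ} {w : κ → E}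
    (hw : (s : Set κ).Pairwise fun i j => ⟪w i, w j⟫_𝕜 = 0) :
    ∑ i ∈ s, ‖w i‖ ≤ √(#s) * ‖∑ i ∈ s, w i‖ := by
  refine le_of_sq_le_sq ?_ (by positivity)
  rw [mul_pow, Real.sq_sqrt (by positivity), norm_sq_sum_of_pairwise_inner_eq_zero hw]
  exact sq_sum_le_card_mul_sum_sq

end OrthogonalSums

section Projection

variable {𝕜 E ι : Type*} [RCLike 𝕜] [NormedAddCommGroup E] [InnerProductSpace 𝕜 E] [Fintype ι]

theorem sum_norm_sq_starProjection_eq_finrank (b : OrthonormalBasis ι 𝕜 E) (W : Submodule 𝕜 E)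
    [W.HasOrthogonalProjection] :
    ∑ i, ‖W.starProjection (b i)‖ ^ 2 = finrank 𝕜 W := by
  have := b.toBasis.finiteDimensional_of_finite
  have hproj : LinearMap.IsProj W (W.starProjection : E →ₗ[𝕜] E) :=
    ⟨W.starProjection_apply_mem, fun x hx => Submodule.starProjection_eq_self_iff.2 hx⟩
  have htrace := LinearMap.trace_eq_sum_inner (W.starProjection : E →ₗ[𝕜] E) b
  rw [hproj.trace] at htrace
  have hinner (i : ι) : ⟪b i, W.starProjection (b i)⟫_𝕜 = (‖W.starProjection (b i)‖ : 𝕜) ^ 2 := by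
    rw [← inner_self_eq_norm_sq_to_K, Submodule.inner_starProjection_left_eq_right,
      Submodule.starProjection_eq_self_iff.2 (W.starProjection_apply_mem _)]
  simp only [ContinuousLinearMap.coe_coe, hinner] at htrace
  exact_mod_cast htrace.symm

theorem mul_card_filter_le_norm_sq_starProjection_le (b : OrthonormalBasis ι 𝕜 E)
    (W : Submodule 𝕜 E) [W.HasOrthogonalProjection] (c : ℝ) :
    c * #{i | c ≤ ‖W.starProjection (b i)‖ ^ 2} ≤ finrank 𝕜 W := by
  rw [← sum_norm_sq_starProjection_eq_finrank b W, mul_comm, ← nsmul_eq_mul]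
  calc _ ≤ ∑ i with c ≤ ‖W.starProjection (b i)‖ ^ 2, ‖W.starProjection (b i)‖ ^ 2 :=
        card_nsmul_le_sum _ _ _ fun i hi => (mem_filter.1 hi).2
    _ ≤ ∑ i, ‖W.starProjection (b i)‖ ^ 2 :=
        sum_le_univ_sum_of_nonneg fun i => by positivity

theorem norm_sub_starProjection_le_norm_sub (W : Submodule 𝕜 E) [W.HasOrthogonalProjection]
    (y : E) {u : E} (hu : u ∈ W) : ‖y - W.starProjection y‖ ≤ ‖y - u‖ := by
  rw [W.starProjection_minimal y]
  have hbdd : BddBelow (Set.range fun x : W => ‖y - x‖) :=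
    ⟨0, Set.forall_mem_range.2 fun x => norm_nonneg _⟩
  exact ciInf_le hbdd ⟨u, hu⟩

end Projection

section CoordSupport

variable {𝕜 ι : Type*} [RCLike 𝕜] [Fintype ι]

/-- The finite set of coordinates at which a vector does not vanish; `v` is `t`-sparse exactly when
its coordinate support has at most `t` elements. -/
def coordSupport (v : EuclideanSpace 𝕜 ι) : Finset ι := by
  classical exact {i | v i ≠ 0}

@[simp]
theorem mem_coordSupport {v : EuclideanSpace 𝕜 ι} {i : ι} : i ∈ coordSupport v ↔ v i ≠ 0 := by
  simp [coordSupport]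

theorem sum_coordSupport_smul_single [DecidableEq ι] (v : EuclideanSpace 𝕜 ι) :
    ∑ i ∈ coordSupport v, v i • EuclideanSpace.single i (1 : 𝕜) = v := by
  ext j
  simp +contextual [Pi.single_apply]

theorem sum_norm_apply_le_sqrt_card_coordSupport_mul_norm (v : EuclideanSpace 𝕜 ι) :
    ∑ i, ‖v i‖ ≤ √(#(coordSupport v)) * ‖v‖ := by
  classical
  have horth : (coordSupport v : Set ι).Pairwise fun i j =>
      ⟪v i • EuclideanSpace.single i (1 : 𝕜), v j • EuclideanSpace.single j (1 : 𝕜)⟫_𝕜 = 0 :=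
    fun i _ j _ hij => by
      simp [inner_smul_left, inner_smul_right, EuclideanSpace.inner_single_left, hij]
  calc ∑ i, ‖v i‖ = ∑ i ∈ coordSupport v, ‖v i‖ :=
        (sum_subset (subset_univ _) fun i _ hi => by simpa using hi).symm
    _ ≤ √(#(coordSupport v)) * ‖v‖ := by
        simpa [norm_smul, sum_coordSupport_smul_single] using
          sum_norm_le_sqrt_card_mul_norm_sum horth

theorem norm_map_sq_le_sum_norm_map_single_sq_mul [DecidableEq ι] {F : Type*}
    [SeminormedAddCommGroup F] [NormedSpace 𝕜 F] (f : EuclideanSpace 𝕜 ι →ₗ[𝕜] F)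
    (v : EuclideanSpace 𝕜 ι) :
    ‖f v‖ ^ 2 ≤ (∑ i ∈ coordSupport v, ‖f (EuclideanSpace.single i 1)‖ ^ 2) * ‖v‖ ^ 2 := by
  have htriangle : ‖f v‖ ≤ ∑ i ∈ coordSupport v, ‖f (EuclideanSpace.single i 1)‖ * ‖v i‖ := by
    conv_lhs => rw [← sum_coordSupport_smul_single v, map_sum]
    refine norm_sum_le_of_le _ fun i _ => ?_
    rw [map_smul, norm_smul, mul_comm]
  calc ‖f v‖ ^ 2
      ≤ (∑ i ∈ coordSupport v, ‖f (EuclideanSpace.single i 1)‖ * ‖v i‖) ^ 2 := by gcongr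
    _ ≤ (∑ i ∈ coordSupport v, ‖f (EuclideanSpace.single i 1)‖ ^ 2) *
          ∑ i ∈ coordSupport v, ‖v i‖ ^ 2 := sum_mul_sq_le_sq_mul_sq _ _ _
    _ ≤ _ := by
      rw [EuclideanSpace.norm_sq_eq v]
      gcongr
      exact subset_univ _

end CoordSupport

section EraseCoords

variable {𝕜 ι : Type*} [RCLike 𝕜] [DecidableEq ι]

/-- The coordinate projection that sets the coordinates in `S` to zero and keeps the others. -/
def eraseCoords (S : Finset ι) : EuclideanSpace 𝕜 ι →ₗ[𝕜] EuclideanSpace 𝕜 ι where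
  toFun v := WithLp.toLp 2 fun i => if i ∈ S then 0 else v i
  map_add' v w := by ext i; by_cases hi : i ∈ S <;> simp [hi]
  map_smul' c v := by ext i; by_cases hi : i ∈ S <;> simp [hi]

theorem eraseCoords_apply (S : Finset ι) (v : EuclideanSpace 𝕜 ι) (i : ι) :
    eraseCoords S v i = if i ∈ S then 0 else v i := rfl

theorem eraseCoords_union (S B : Finset ι) (v : EuclideanSpace 𝕜 ι) :
    eraseCoords (S ∪ B) v = eraseCoords B (eraseCoords S v) := by
  ext i
  by_cases hS : i ∈ S <;> simp [eraseCoords_apply, hS]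

variable [Fintype ι]

theorem coordSupport_eraseCoords (S : Finset ι) (v : EuclideanSpace 𝕜 ι) :
    coordSupport (eraseCoords S v) = coordSupport v \ S := by
  ext i
  simp [eraseCoords_apply, and_comm]

theorem coordSupport_sub_eraseCoords (S : Finset ι) (v : EuclideanSpace 𝕜 ι) :
    coordSupport (v - eraseCoords S v) = coordSupport v ∩ S := by
  ext i
  by_cases hi : i ∈ S <;> simp [eraseCoords_apply, hi]

theorem norm_eraseCoords_le (S : Finset ι) (v : EuclideanSpace 𝕜 ι) :
    ‖eraseCoords S v‖ ≤ ‖v‖ := by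
  rw [EuclideanSpace.norm_eq, EuclideanSpace.norm_eq]
  gcongr with i
  rw [eraseCoords_apply]
  split_ifs <;> simp

theorem norm_eraseCoords_union_le (S B : Finset ι) (v : EuclideanSpace 𝕜 ι) :
    ‖eraseCoords (S ∪ B) v‖ ≤ ‖eraseCoords S v‖ := by
  rw [eraseCoords_union]
  exact norm_eraseCoords_le B _

end EraseCoords

section Peeling

variable {𝕜 ι : Type*} [RCLike 𝕜] [Fintype ι]

theorem exists_finset_norm_le_of_disjoint_coordSupport {t : ℕ} (ht : 0 < t)
    (W : Submodule 𝕜 (EuclideanSpace 𝕜 ι)) :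
    ∃ B : Finset ι, 4 * #B ≤ 9 * t * finrank 𝕜 W ∧
      ∀ y : EuclideanSpace 𝕜 ι, #(coordSupport y) ≤ t → Disjoint (coordSupport y) B →
        ∀ u ∈ W, ‖y‖ ≤ 3 * ‖y - u‖ := by
  classical
  set e := EuclideanSpace.basisFun ι 𝕜
  refine ⟨({i | 4 / (9 * t : ℝ) ≤ ‖W.starProjection (e i)‖ ^ 2} : Finset ι), ?_, ?_⟩
  · have hmarkov := mul_card_filter_le_norm_sq_starProjection_le e W (4 / (9 * t))
    rw [div_mul_eq_mul_div, div_le_iff₀' (by positivity)] at hmarkov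
    exact_mod_cast hmarkov
  intro y hy hdisj u hu
  have hsum : ∑ i ∈ coordSupport y, ‖W.starProjection (EuclideanSpace.single i 1)‖ ^ 2 ≤ 4 / 9 :=
    calc _ ≤ #(coordSupport y) • (4 / (9 * t : ℝ)) := sum_le_card_nsmul _ _ _ fun i hi =>
          le_of_lt (by simpa [e] using disjoint_left.1 hdisj hi)
      _ ≤ t * (4 / (9 * t)) := by rw [nsmul_eq_mul]; gcongr
      _ = 4 / 9 := by field_simp
  have hproj : ‖W.starProjection y‖ ≤ 2 / 3 * ‖y‖ := by
    refine le_of_sq_le_sq ?_ (by positivity)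
    calc ‖W.starProjection y‖ ^ 2
        ≤ (∑ i ∈ coordSupport y, ‖W.starProjection (EuclideanSpace.single i 1)‖ ^ 2) * ‖y‖ ^ 2 :=
          norm_map_sq_le_sum_norm_map_single_sq_mul W.starProjection.toLinearMap y
      _ ≤ 4 / 9 * ‖y‖ ^ 2 := by gcongr
      _ = (2 / 3 * ‖y‖) ^ 2 := by ring
  linarith [norm_le_norm_sub_add y (W.starProjection y),
    norm_sub_starProjection_le_norm_sub W y hu]

variable [DecidableEq ι]

theorem exists_finset_norm_eraseCoords_le_or_le_card {t : ℕ} (ht : 0 < t)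
    (V : Submodule 𝕜 (EuclideanSpace 𝕜 ι)) (k : ℕ) :
    ∃ S : Finset ι, 4 * #S ≤ k * (9 * t * finrank 𝕜 V) ∧
      ∀ v : EuclideanSpace 𝕜 ι, #(coordSupport v) ≤ t →
        (∀ u ∈ V, ‖eraseCoords S v‖ ≤ 3 * ‖v - u‖) ∨ k ≤ #(coordSupport v ∩ S) := by
  induction k with
  | zero => exact ⟨∅, by simp, fun v _ => Or.inr (Nat.zero_le _)⟩
  | succ k ih =>
    obtain ⟨S, hScard, hS⟩ := ih
    obtain ⟨B, hBcard, hB⟩ :=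
      exists_finset_norm_le_of_disjoint_coordSupport ht (V.map (eraseCoords S))
    refine ⟨S ∪ B, ?_, fun v hv => ?_⟩
    · calc 4 * #(S ∪ B) ≤ 4 * #S + 4 * #B := by linarith [card_union_le S B]
        _ ≤ k * (9 * t * finrank 𝕜 V) + 9 * t * finrank 𝕜 V := by
          refine add_le_add hScard (hBcard.trans ?_)
          gcongr
          exact Submodule.finrank_map_le _ _
        _ = (k + 1) * (9 * t * finrank 𝕜 V) := by ring
    rcases hS v hv with hfar | hhit
    · exact Or.inl fun u hu => (norm_eraseCoords_union_le S B v).trans (hfar u hu)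
    by_cases hdisj : Disjoint (coordSupport (eraseCoords S v)) B
    · left
      intro u hu
      calc ‖eraseCoords (S ∪ B) v‖ ≤ ‖eraseCoords S v‖ := norm_eraseCoords_union_le S B v
        _ ≤ 3 * ‖eraseCoords S v - eraseCoords S u‖ := by
          refine hB _ ?_ hdisj _ (Submodule.mem_map_of_mem hu)
          rw [coordSupport_eraseCoords]
          exact (card_le_card sdiff_subset).trans hv
        _ ≤ 3 * ‖v - u‖ := by
          rw [← map_sub]
          gcongr
          exact norm_eraseCoords_le S _
    · right
      obtain ⟨i, hi, hiB⟩ := not_disjoint_iff.1 hdisj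
      rw [coordSupport_eraseCoords, mem_sdiff] at hi
      have hsub : coordSupport v ∩ S ⊆ coordSupport v ∩ (S ∪ B) := by
        gcongr
        exact subset_union_left
      refine hhit.trans_lt (card_lt_card ((ssubset_iff_of_subset hsub).2 ⟨i, ?_, ?_⟩))
      · exact mem_inter.2 ⟨hi.1, mem_union_right S hiB⟩
      · exact fun hiS => hi.2 (mem_inter.1 hiS).2

theorem exists_finset_norm_eraseCoords_le {t : ℕ} (ht : 0 < t)
    (V : Submodule 𝕜 (EuclideanSpace 𝕜 ι)) :
    ∃ S : Finset ι, #S ≤ 5 * t ^ 2 * finrank 𝕜 V ∧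
      ∀ v : EuclideanSpace 𝕜 ι, #(coordSupport v) ≤ t →
        ∀ u ∈ V, ‖eraseCoords S v‖ ≤ 3 * ‖v - u‖ := by
  obtain ⟨S, hcard, hS⟩ := exists_finset_norm_eraseCoords_le_or_le_card ht V (t + 1)
  refine ⟨S, ?_, fun v hv => (hS v hv).resolve_right fun hhit => ?_⟩
  · nlinarith [Nat.mul_le_mul_right (t * finrank 𝕜 V) ht]
  · exact absurd (hhit.trans (card_le_card inter_subset_left)) (by omega)

end Peeling

/-- `v` is a linear combination of the dictionary `D` of `ℓ1`-cost at most `C`, where using a vector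
`x` with coefficient `a` costs `|a| * p x`. A family `D` is a `(t, B)`-`ℓ1`-representation for `Σ`
when every `t`-sparse `v` satisfies this with `p = ‖·‖_Σ` and `C = B * ‖v‖_Σ`. -/
def IsL1Combination {E κ : Type*} [AddCommGroup E] [Module ℝ E] [Fintype κ]
    (p : E → ℝ) (D : κ → E) (C : ℝ) (v : E) : Prop :=
  ∃ a : κ → ℝ, v = ∑ k, a k • D k ∧ ∑ k, |a k| * p (D k) ≤ C

namespace IsL1Combination

variable {E κ κ' : Type*} [AddCommGroup E] [Module ℝ E] [Fintype κ] [Fintype κ']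
  {p : E → ℝ} {D : κ → E} {D' : κ' → E} {C C' : ℝ} {v w : E}

theorem mono (h : IsL1Combination p D C v) (hC : C ≤ C') : IsL1Combination p D C' v := by
  obtain ⟨a, hv, hcost⟩ := h
  exact ⟨a, hv, hcost.trans hC⟩

theorem zero : IsL1Combination p D 0 0 :=
  ⟨fun _ => 0, by simp, by simp⟩

theorem sumElim (hv : IsL1Combination p D C v) (hw : IsL1Combination p D' C' w) :
    IsL1Combination p (Sum.elim D D') (C + C') (v + w) := by
  obtain ⟨a, hv, hcost⟩ := hv
  obtain ⟨a', hw, hcost'⟩ := hw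
  refine ⟨Sum.elim a a', by simp [hv, hw], ?_⟩
  simpa using add_le_add hcost hcost'

theorem of_comp_injective {f : κ' → κ} (hf : Function.Injective f)
    (h : IsL1Combination p (D ∘ f) C v) : IsL1Combination p D C v := by
  obtain ⟨a, hv, hcost⟩ := h
  have hextend (k : κ) (hk : k ∉ Set.range f) : Function.extend f a (fun _ => 0) k = 0 := by
    simpa using Function.extend_apply' a (fun _ => 0) k hk
  refine ⟨Function.extend f a (fun _ => 0), hv.trans ?_, le_of_eq_of_le ?_ hcost⟩
  · exact Fintype.sum_of_injective f hf _ _ (fun k hk => by simp [hextend k hk])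
      fun k => by simp [hf.extend_apply]
  · exact (Fintype.sum_of_injective f hf _ _ (fun k hk => by simp [hextend k hk])
      fun k => by simp [hf.extend_apply]).symm

end IsL1Combination

section Dictionaries

variable {E F : Type*} [AddCommGroup E] [Module ℝ E] [SeminormedAddCommGroup F]
  [InnerProductSpace ℝ F]

theorem exists_basis_pairwise_inner_map_eq_zero [FiniteDimensional ℝ E] (T : E →ₗ[ℝ] F) :
    ∃ b : Basis (Fin (finrank ℝ E)) ℝ E, Pairwise fun i j => ⟪T (b i), T (b j)⟫_ℝ = 0 := by
  let pullback : LinearMap.BilinForm ℝ E := (innerₗ F).compl₁₂ T T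
  have hsymm : pullback.IsSymm := ⟨fun x y => real_inner_comm (T y) (T x)⟩
  obtain ⟨b, hb⟩ :=
    LinearMap.BilinForm.exists_orthogonal_basis (LinearMap.BilinForm.isSymm_iff.1 hsymm)
  exact ⟨b, fun i j hij => LinearMap.isOrthoᵢ_def.1 hb i j hij⟩

theorem exists_isL1Combination_of_mem_span {κ : Type*} [Fintype κ] (T : E →ₗ[ℝ] F) (e : κ → E) :
    ∃ D : κ → E, ∀ v ∈ Submodule.span ℝ (Set.range e),
      IsL1Combination (‖T ·‖) D (√(Fintype.card κ) * ‖T v‖) v := by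
  let L := Fintype.linearCombination ℝ e
  obtain ⟨b, hb⟩ := exists_basis_pairwise_inner_map_eq_zero (T ∘ₗ L)
  let b' := b.reindex (Fintype.equivOfCardEq (β := κ) (by simp))
  have hb' : Pairwise fun i j => ⟪T (L (b' i)), T (L (b' j))⟫_ℝ = 0 := fun i j hij => by
    simpa [b'] using hb ((Equiv.injective _).ne hij)
  refine ⟨fun k => L (b' k), fun v hv => ?_⟩
  rw [← Fintype.range_linearCombination] at hv
  obtain ⟨c, rfl⟩ := hv
  have hrepr : L c = ∑ k, b'.repr c k • L (b' k) := by
    conv_lhs => rw [← b'.sum_repr c]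
    simp only [map_sum, map_smul]
  refine ⟨b'.repr c, hrepr, ?_⟩
  have horth : ((univ : Finset κ) : Set κ).Pairwise fun i j =>
      ⟪T (b'.repr c i • L (b' i)), T (b'.repr c j • L (b' j))⟫_ℝ = 0 := fun i _ j _ hij => by
    simp [inner_smul_left, inner_smul_right, hb' hij]
  calc ∑ k, |b'.repr c k| * ‖T (L (b' k))‖ = ∑ k, ‖T (b'.repr c k • L (b' k))‖ := by
        simp [norm_smul]
    _ ≤ √(#(univ : Finset κ)) * ‖∑ k, T (b'.repr c k • L (b' k))‖ :=
        sum_norm_le_sqrt_card_mul_norm_sum horth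
    _ = √(Fintype.card κ) * ‖T (L c)‖ := by rw [← map_sum, ← hrepr, card_univ]

variable {ι : Type*} [Fintype ι] (T : EuclideanSpace ℝ ι →L[ℝ] F)

theorem isL1Combination_single [DecidableEq ι] (v : EuclideanSpace ℝ ι) :
    IsL1Combination (‖T ·‖) (fun i => EuclideanSpace.single i 1)
      (√(#(coordSupport v)) * (‖T‖ * ‖v‖)) v := by
  refine ⟨v, by ext j; simp [Pi.single_apply], ?_⟩
  calc ∑ i, |v i| * ‖T (EuclideanSpace.single i 1)‖ ≤ ∑ i, ‖v i‖ * ‖T‖ := by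
        gcongr with i
        · simp
        · simpa using T.le_opNorm (EuclideanSpace.single i 1)
    _ ≤ √(#(coordSupport v)) * ‖v‖ * ‖T‖ := by
        rw [← sum_mul]
        gcongr
        exact sum_norm_apply_le_sqrt_card_coordSupport_mul_norm v
    _ = √(#(coordSupport v)) * (‖T‖ * ‖v‖) := by ring

theorem exists_isL1Combination_of_coordSupport_subset (S : Finset ι) (t : ℕ) :
    ∃ D : (Fin t → S) × Fin t → EuclideanSpace ℝ ι, ∀ v, #(coordSupport v) ≤ t →
      coordSupport v ⊆ S → IsL1Combination (‖T ·‖) D (√t * ‖T v‖) v := by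
  classical
  choose D hD using fun f : Fin t → S => exists_isL1Combination_of_mem_span T.toLinearMap
    fun j => EuclideanSpace.single (f j : ι) (1 : ℝ)
  simp only [Fintype.card_fin, ContinuousLinearMap.coe_coe] at hD
  refine ⟨fun q => D q.1 q.2, fun v hv hvS => ?_⟩
  rcases (coordSupport v).eq_empty_or_nonempty with hempty | hne
  · have hv0 : v = 0 := by rw [← sum_coordSupport_smul_single v, hempty, sum_empty]
    simpa [hv0] using IsL1Combination.zero
  have := hne.to_subtype
  obtain ⟨f, hf⟩ : ∃ f : Fin t → coordSupport v, Function.Surjective f :=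
    Function.exists_surjective_iff.2
      ⟨inferInstance, Function.Embedding.nonempty_of_card_le
        (by rwa [Fintype.card_coe, Fintype.card_fin])⟩
  let fS : Fin t → S := fun j => ⟨f j, hvS (f j).2⟩
  have hspan : v ∈ Submodule.span ℝ (Set.range fun j =>
      EuclideanSpace.single (fS j : ι) (1 : ℝ)) := by
    rw [← sum_coordSupport_smul_single v]
    refine Submodule.sum_mem _ fun i hi => Submodule.smul_mem _ _ (Submodule.subset_span ?_)
    obtain ⟨j, hj⟩ := hf ⟨i, hi⟩
    exact ⟨j, by simp [fS, hj]⟩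
  exact (hD fS v hspan).of_comp_injective (Prod.mk_right_injective fS)

theorem exists_isL1Combination_of_card_coordSupport_le [DecidableEq ι] (S : Finset ι) (t : ℕ) :
    ∃ D : ι ⊕ (Fin t → S) × Fin t → EuclideanSpace ℝ ι, ∀ v, #(coordSupport v) ≤ t →
      IsL1Combination (‖T ·‖) D (√t * (‖T v‖ + 2 * (‖T‖ * ‖eraseCoords S v‖))) v := by
  obtain ⟨D, hD⟩ := exists_isL1Combination_of_coordSupport_subset T S t
  refine ⟨Sum.elim (fun i => EuclideanSpace.single i 1) D, fun v hv => ?_⟩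
  set w := eraseCoords S v with hw
  have hwcard : #(coordSupport w) ≤ t := by
    rw [hw, coordSupport_eraseCoords]
    exact (card_le_card sdiff_subset).trans hv
  have hz := coordSupport_sub_eraseCoords S v
  have hzrep := hD (v - w) (hz ▸ (card_le_card inter_subset_left).trans hv)
    (hz ▸ inter_subset_right)
  have hznorm : ‖T (v - w)‖ ≤ ‖T v‖ + ‖T‖ * ‖w‖ := by
    rw [map_sub]
    linarith [norm_sub_le (T v) (T w), T.le_opNorm w]
  rw [← add_sub_cancel w v]
  refine ((isL1Combination_single T w).sumElim hzrep).mono ?_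
  rw [add_sub_cancel]
  calc √(#(coordSupport w)) * (‖T‖ * ‖w‖) + √t * ‖T (v - w)‖
      ≤ √t * (‖T‖ * ‖w‖) + √t * (‖T v‖ + ‖T‖ * ‖w‖) := by gcongr
    _ = √t * (‖T v‖ + 2 * (‖T‖ * ‖w‖)) := by ring

theorem exists_isL1Combination_of_exists_mem_mul_norm_sub_le {t : ℕ} (ht : 0 < t)
    (V : Submodule ℝ (EuclideanSpace ℝ ι)) {m : ℝ} (hm : 0 < m)
    (hV : ∀ v, ∃ u ∈ V, m * ‖v - u‖ ≤ ‖T v‖) :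
    ∃ (N : ℕ) (D : Fin N → EuclideanSpace ℝ ι),
      (∀ v, #(coordSupport v) ≤ t →
        IsL1Combination (‖T ·‖) D (√t * (1 + 6 * (‖T‖ / m)) * ‖T v‖) v) ∧
      N ≤ Fintype.card ι + t * (5 * t ^ 2 * finrank ℝ V) ^ t := by
  classical
  obtain ⟨S, hScard, hS⟩ := exists_finset_norm_eraseCoords_le ht V
  obtain ⟨D, hD⟩ := exists_isL1Combination_of_card_coordSupport_le T S t
  let e := Fintype.equivFin (ι ⊕ (Fin t → S) × Fin t)
  refine ⟨_, D ∘ e.symm, fun v hv => ?_, ?_⟩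
  · have herase : ‖eraseCoords S v‖ ≤ 3 * (‖T v‖ / m) := by
      obtain ⟨u, hu, huv⟩ := hV v
      rw [← le_div_iff₀' hm] at huv
      linarith [hS v hv u hu]
    have hDe : IsL1Combination (‖T ·‖) ((D ∘ e.symm) ∘ e)
        (√t * (‖T v‖ + 2 * (‖T‖ * ‖eraseCoords S v‖))) v := by
      simpa [Function.comp_def] using hD v hv
    refine (hDe.of_comp_injective e.injective).mono ?_
    calc √t * (‖T v‖ + 2 * (‖T‖ * ‖eraseCoords S v‖))
        ≤ √t * (‖T v‖ + 2 * (‖T‖ * (3 * (‖T v‖ / m)))) := by gcongr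
      _ = √t * (1 + 6 * (‖T‖ / m)) * ‖T v‖ := by ring
  · simp only [Fintype.card_sum, Fintype.card_prod, Fintype.card_fun, Fintype.card_fin,
      Fintype.card_coe, mul_comm _ t]
    gcongr

end Dictionaries

section Diagonalization

variable {E F ι : Type*} [NormedAddCommGroup E] [InnerProductSpace ℝ E] [SeminormedAddCommGroup F]
  [NormedSpace ℝ F] [Fintype ι] {T : E →L[ℝ] F} {b : OrthonormalBasis ι ℝ E} {μ : ι → ℝ}

theorem opNorm_le_sqrt_of_norm_sq_eq_sum (hT : ∀ v, ‖T v‖ ^ 2 = ∑ i, μ i * ⟪b i, v⟫_ℝ ^ 2)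
    {M : ℝ} (hM : ∀ i, μ i ≤ M) : ‖T‖ ≤ √M := by
  refine T.opNorm_le_bound (Real.sqrt_nonneg M) fun v => ?_
  rw [← Real.sqrt_sq (norm_nonneg v), ← Real.sqrt_mul' M (sq_nonneg _)]
  refine Real.le_sqrt_of_sq_le ?_
  rw [hT, ← b.sum_sq_norm_inner_right, mul_sum]
  refine sum_le_sum fun i _ => ?_
  rw [Real.norm_eq_abs, sq_abs]
  exact mul_le_mul_of_nonneg_right (hM i) (sq_nonneg _)

theorem exists_submodule_sqrt_mul_norm_sub_le
    (hT : ∀ v, ‖T v‖ ^ 2 = ∑ i, μ i * ⟪b i, v⟫_ℝ ^ 2) (m : ℝ) :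
    ∃ V : Submodule ℝ E, finrank ℝ V ≤ #{i | μ i < m} ∧
      ∀ v, ∃ u ∈ V, √m * ‖v - u‖ ≤ ‖T v‖ := by
  classical
  set G : Finset ι := {i | μ i < m}
  refine ⟨Submodule.span ℝ (G.image b : Finset E),
    (finrank_span_finset_le_card _).trans card_image_le, fun v => ?_⟩
  refine ⟨∑ i ∈ G, ⟪b i, v⟫_ℝ • b i, Submodule.sum_mem _ fun i hi =>
    Submodule.smul_mem _ _ (Submodule.subset_span (mem_image_of_mem b hi)), ?_⟩
  set u := ∑ i ∈ G, ⟪b i, v⟫_ℝ • b i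
  have hcoord (j : ι) : ⟪b j, v - u⟫_ℝ = if j ∈ G then 0 else ⟪b j, v⟫_ℝ := by
    simp only [u, inner_sub_right, inner_sum, inner_smul_right, b.inner_eq_ite]
    split_ifs with hj <;> simp [hj]
  have hμ (j : ι) : 0 ≤ μ j := by
    have hTj := hT (b j)
    simp only [b.inner_eq_ite] at hTj
    have : ‖T (b j)‖ ^ 2 = μ j := by simpa using hTj
    exact this ▸ sq_nonneg _
  rw [← Real.sqrt_sq (norm_nonneg (v - u)), ← Real.sqrt_mul' m (sq_nonneg _)]
  refine Real.sqrt_le_iff.2 ⟨norm_nonneg _, ?_⟩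
  rw [hT, ← b.sum_sq_norm_inner_right, mul_sum]
  refine sum_le_sum fun j _ => ?_
  rw [hcoord, Real.norm_eq_abs, sq_abs]
  split_ifs with hj
  · simpa using mul_nonneg (hμ j) (sq_nonneg _)
  · gcongr
    simpa [G] using hj

theorem card_filter_lt_le_of_monotone_comp {α : Type*} [LinearOrder α] {n : ℕ} {f : ι → α}
    (g : Fin n ≃ ι) (hmono : Monotone (f ∘ g)) (d : Fin n) : #{i | f i < f (g d)} ≤ d := by
  rw [← Fin.card_Iio d]
  refine card_le_card_of_injOn g.symm (fun i hi => ?_) g.symm.injective.injOn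
  rw [mem_coe, mem_Iio]
  refine hmono.reflect_lt ?_
  simpa using hi

end Diagonalization

section SigmaNorm

variable {n : ℕ} {A : Matrix (Fin n) (Fin n) ℝ}

theorem normSigma_sq (hA : A.PosSemidef) (x : Fin n → ℝ) :
    normSigma A x ^ 2 = innerSigma A x x :=
  Real.sq_sqrt (by simpa [innerSigma] using hA.dotProduct_mulVec_nonneg x)

theorem normSigma_sq_eq_sum (hA : A.PosSemidef) (v : EuclideanSpace ℝ (Fin n)) :
    normSigma A v ^ 2 = ∑ i, hA.1.eigenvalues i * ⟪hA.1.eigenvectorBasis i, v⟫_ℝ ^ 2 := by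
  set b := hA.1.eigenvectorBasis
  have heigen (i : Fin n) : A.toEuclideanLin (b i) = hA.1.eigenvalues i • b i := by
    ext j
    exact congrFun (hA.1.mulVec_eigenvectorBasis i) j
  have hcoord (i : Fin n) : ⟪b i, A.toEuclideanLin v⟫_ℝ = hA.1.eigenvalues i * ⟪b i, v⟫_ℝ := by
    rw [← isSymmetric_toEuclideanLin_iff.2 hA.1, heigen, real_inner_smul_left]
  calc normSigma A v ^ 2 = ⟪v, A.toEuclideanLin v⟫_ℝ := by
        rw [normSigma_sq hA]
        exact (inner_toEuclideanCLM A v v).symm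
    _ = ∑ i, hA.1.eigenvalues i * ⟪b i, v⟫_ℝ ^ 2 := by
        rw [← b.sum_inner_mul_inner]
        refine sum_congr rfl fun i _ => ?_
        rw [hcoord, real_inner_comm]
        ring

theorem exists_continuousLinearMap_norm_eq_normSigma (hA : A.PosSemidef) :
    ∃ T : EuclideanSpace ℝ (Fin n) →L[ℝ] EuclideanSpace ℝ (Fin n), ∀ v, ‖T v‖ = normSigma A v := by
  obtain ⟨B, rfl⟩ : ∃ B : Matrix (Fin n) (Fin n) ℝ, A = star B * B := by
    open scoped MatrixOrder in
    exact CStarAlgebra.nonneg_iff_eq_star_mul_self.1 hA.nonneg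
  refine ⟨toEuclideanCLM (𝕜 := ℝ) B, fun v => ?_⟩
  rw [norm_eq_sqrt_real_inner, normSigma]
  congr 1
  calc _ = ⟪v, toEuclideanCLM (𝕜 := ℝ) (star B * B) v⟫_ℝ := by
        rw [map_mul, map_star, ContinuousLinearMap.star_eq_adjoint, mul_apply_eq_comp,
          ContinuousLinearMap.adjoint_inner_right]
    _ = innerSigma (star B * B) v v := inner_toEuclideanCLM _ v v

theorem isL1Rep_of_forall_isL1Combination {t N : ℕ} {B : ℝ}
    {D : Fin N → EuclideanSpace ℝ (Fin n)}
    (hD : ∀ v : EuclideanSpace ℝ (Fin n), #(coordSupport v) ≤ t →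
      IsL1Combination (normSigma A ·.ofLp) D (B * normSigma A v) v) :
    IsL1Rep t B A fun i => D i := by
  intro v hv
  have hcard : #(coordSupport (WithLp.toLp 2 v)) ≤ t := by
    rwa [SparseVec, show {i | v i ≠ 0} = coordSupport (WithLp.toLp 2 v) by ext; simp,
      Set.ncard_coe_finset] at hv
  obtain ⟨a, hva, hcost⟩ := hD _ hcard
  exact ⟨a, by simpa using congrArg WithLp.ofLp hva, hcost⟩

end SigmaNorm

theorem one_add_six_mul_div_sqrt_le {x m M : ℝ} (hm : 0 < m) (hmM : m ≤ M) (hx : x ≤ √M) :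
    1 + 6 * (x / √m) ≤ 7 * √(M / m) := by
  have hone : 1 ≤ √(M / m) := Real.one_le_sqrt.2 ((one_le_div hm).2 hmM)
  have hdiv : x / √m ≤ √(M / m) := by
    rw [Real.sqrt_div' M hm.le]
    gcongr
  linarith

theorem five_mul_sq_mul_pow_le (t d : ℕ) :
    (5 * t ^ 2 * d) ^ t ≤ (7 * t) ^ (2 * t ^ 2 + t) * d ^ t := by
  rcases t.eq_zero_or_pos with rfl | ht
  · simp
  have hbase : 5 * t ^ 2 ≤ (7 * t) ^ (2 * t + 1) :=
    calc 5 * t ^ 2 ≤ (7 * t) ^ 2 := by rw [mul_pow]; gcongr; norm_num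
      _ ≤ (7 * t) ^ (2 * t + 1) := by gcongr <;> omega
  calc (5 * t ^ 2 * d) ^ t ≤ ((7 * t) ^ (2 * t + 1) * d) ^ t := by gcongr
    _ = (7 * t) ^ (2 * t ^ 2 + t) * d ^ t := by rw [mul_pow, ← pow_mul]; ring_nf

/-- Σ has a (t, 7√t·√(λₙ/λ_{d+1}))-ℓ1-representation of size at most
n + t(7t)^{2t²+t}dᵗ. `lam` enumerates the eigenvalues of Σ in nondecreasing order. -/
theorem stmt7 (n t d : ℕ) (ht : 1 ≤ t) (hd : d + 1 ≤ n)
    (A : Matrix (Fin n) (Fin n) ℝ) (hA : A.PosSemidef)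
    (lam : Fin n → ℝ) (hmono : Monotone lam)
    (g : Fin n ≃ Fin n) (hg : lam = hA.1.eigenvalues ∘ g)
    (hpos : 0 < lam ⟨d, by omega⟩) :
    ∃ (N : ℕ) (D : Fin N → Fin n → ℝ),
      IsL1Rep t (7 * Real.sqrt t * Real.sqrt (lam ⟨n - 1, by omega⟩ / lam ⟨d, by omega⟩)) A D ∧
        N ≤ n + t * (7 * t) ^ (2 * t ^ 2 + t) * d ^ t := by
  subst hg
  set m := (hA.1.eigenvalues ∘ g) ⟨d, by omega⟩
  set M := (hA.1.eigenvalues ∘ g) ⟨n - 1, by omega⟩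
  have hmM : m ≤ M := hmono (Fin.mk_le_mk.2 (by omega))
  have hle (i : Fin n) : hA.1.eigenvalues i ≤ M := by
    rw [← g.apply_symm_apply i]
    exact hmono (Fin.le_def.2 (Nat.le_sub_one_of_lt (g.symm i).isLt))
  obtain ⟨T, hT⟩ := exists_continuousLinearMap_norm_eq_normSigma hA
  have hdiag (v) := (congrArg (· ^ 2) (hT v)).trans (normSigma_sq_eq_sum hA v)
  obtain ⟨V, hVcard, hV⟩ := exists_submodule_sqrt_mul_norm_sub_le hdiag m
  have hVd : finrank ℝ V ≤ d := hVcard.trans (card_filter_lt_le_of_monotone_comp g hmono ⟨d, _⟩)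
  obtain ⟨N, D, hD, hN⟩ :=
    exists_isL1Combination_of_exists_mem_mul_norm_sub_le T ht V (Real.sqrt_pos.2 hpos) hV
  have hcost := one_add_six_mul_div_sqrt_le hpos hmM (opNorm_le_sqrt_of_norm_sq_eq_sum hdiag hle)
  refine ⟨N, fun i => D i, isL1Rep_of_forall_isL1Combination fun v hv => ?_, hN.trans ?_⟩
  · simp only [hT] at hD
    refine (hD v hv).mono (mul_le_mul_of_nonneg_right ?_ (Real.sqrt_nonneg _))
    rw [mul_comm 7, mul_assoc √t]
    gcongr
  · rw [Fintype.card_fin, mul_assoc t]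
    gcongr
    exact le_trans (by gcongr) (five_mul_sq_mul_pow_le t d)
end
end
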